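/- arXiv:1703.04256 — 2 statements merged into one kernel-verified Lean document; each statement's English description precedes it below -/
import Mathlib

section
/- Let φ be a trace on an ideal I of bounded operators on a separable Hilbert space H, i.e. a linear functional with φ(TS) = φ(ST) for all T ∈ I and S ∈ L(H). If T₁, T₂ ∈ I are positive operators with the same singular value sequences μ(T₁) = μ(T₂), then φ(T₁) = φ(T₂). -/
/-!
Two positive compact operators with the same singular values have the same nonzero eigenvalues with
multiplicities, so they are conjugate by a partial isometry, which a trace cannot see.

The spectral theorem gives each `Tⱼ` an orthonormal family of eigenvectors with positive eigenvalues
off which it vanishes (`exists_isPosEigenbasis`). A min-max argument shows that `c < sval T k` holds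
exactly when more than `k` eigenvalues exceed `c` (`IsPosEigenbasis.lt_sval_iff`); hence the
singular values determine the counting function of the eigenvalues, and, as these accumulate only
at `0`, their multiplicities (`exists_equiv`). Sending the eigenvectors of `T₁` to those of `T₂` is
a partial isometry `V` with `V T₁ V* = T₂` and `V* V T₁ = T₁` (`exists_conj`). Finally
`φ(T₂) = φ((V T₁) V*) = φ(V* (V T₁)) = φ(T₁)`.
-/

/-- The `k`-th singular value of `T` (the `k`-th approximation number; for compact `T`
this is the `k`-th largest eigenvalue of `|T|`). -/
noncomputable def sval {H : Type*} [NormedAddCommGroup H] [InnerProductSpace ℂ H]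
    [CompleteSpace H] (T : H →L[ℂ] H) (k : ℕ) : ℝ :=
  sInf {c : ℝ | ∃ F : H →L[ℂ] H,
    Module.rank ℂ (LinearMap.range (F : H →ₗ[ℂ] H)) ≤ k ∧ ‖T - F‖ = c}

open scoped InnerProductSpace Topology

/-- `b` is an orthonormal family of eigenvectors of `T` with strictly positive eigenvalues `ν`
(repeated according to multiplicity), and `T` vanishes on the orthogonal complement of `b`.
The kernel of `T` carries no basis vectors, so the index type may be finite or empty. -/
structure IsPosEigenbasis {H : Type*} [NormedAddCommGroup H] [InnerProductSpace ℂ H]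
    (T : H →L[ℂ] H) {ι : Type*} (b : ι → H) (ν : ι → ℝ) : Prop where
  orthonormal : Orthonormal ℂ b
  pos : ∀ i, 0 < ν i
  apply_eq : ∀ i, T (b i) = (ν i : ℂ) • b i
  apply_eq_zero : ∀ x, (∀ i, ⟪b i, x⟫_ℂ = 0) → T x = 0

/-! ### Diagonalization -/

section

variable {H : Type*} [NormedAddCommGroup H] [InnerProductSpace ℂ H]

/-- The spectral theorem for compact positive operators: orthonormal bases of the
finite-dimensional eigenspaces for the positive eigenvalues, put together. -/
theorem exists_isPosEigenbasis [CompleteSpace H] {T : H →L[ℂ] H} (hc : IsCompactOperator T)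
    (hp : T.IsPositive) :
    ∃ (ι : Type) (b : ι → H) (ν : ι → ℝ), IsPosEigenbasis T b ν := by
  have hs := hp.isSymmetric
  have hfd : ∀ μ : {μ : ℝ // 0 < μ},
      FiniteDimensional ℂ (Module.End.eigenspace (T : H →ₗ[ℂ] H) ((μ : ℝ) : ℂ)) := fun μ =>
    ContinuousLinearMap.finite_dimensional_eigenspace hc _
      (Complex.ofReal_ne_zero.mpr μ.2.ne')
  have hof := hs.orthogonalFamily_eigenspaces.comp
    (γ := {μ : ℝ // 0 < μ}) (f := fun μ => ((μ : ℝ) : ℂ))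
    (Complex.ofReal_injective.comp Subtype.val_injective)
  refine ⟨Σ μ : {μ : ℝ // 0 < μ},
    Fin (Module.finrank ℂ (Module.End.eigenspace (T : H →ₗ[ℂ] H) ((μ : ℝ) : ℂ))),
    fun a => (stdOrthonormalBasis ℂ
      (Module.End.eigenspace (T : H →ₗ[ℂ] H) ((a.1 : ℝ) : ℂ)) a.2 : H),
    fun a => a.1, ?_, fun a => a.1.2, ?_, ?_⟩
  · exact hof.orthonormal_sigma_orthonormal
      (v_family := fun μ => stdOrthonormalBasis ℂ
        (Module.End.eigenspace (T : H →ₗ[ℂ] H) ((μ : ℝ) : ℂ)))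
      (fun μ => (stdOrthonormalBasis ℂ _).orthonormal)
  · intro a
    exact Module.End.mem_eigenspace_iff.mp (stdOrthonormalBasis ℂ
      (Module.End.eigenspace (T : H →ₗ[ℂ] H) ((a.1 : ℝ) : ℂ)) a.2).2
  · intro x hx
    have hxE : ∀ μ : {μ : ℝ // 0 < μ},
        ∀ v ∈ Module.End.eigenspace (T : H →ₗ[ℂ] H) ((μ : ℝ) : ℂ), ⟪v, x⟫_ℂ = 0 := by
      intro μ v hv
      have h := (stdOrthonormalBasis ℂ
        (Module.End.eigenspace (T : H →ₗ[ℂ] H) ((μ : ℝ) : ℂ))).sum_repr ⟨v, hv⟩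
      have h' := congrArg (Subtype.val) h
      rw [← show _ = v from h']
      simp only [AddSubmonoidClass.coe_finsetSum, SetLike.val_smul, sum_inner, inner_smul_left]
      exact Finset.sum_eq_zero fun i _ => by rw [hx ⟨μ, i⟩, mul_zero]
    -- `T x` is orthogonal to every eigenspace: to those of positive eigenvalue because `x` is,
    -- to the kernel by symmetry of `T`, and all the others are trivial.
    have key : T x ∈ (⨆ μ, Module.End.eigenspace (T : H →ₗ[ℂ] H) μ)ᗮ := by
      rw [← Submodule.iInf_orthogonal, Submodule.mem_iInf]
      intro μ
      rw [Submodule.mem_orthogonal]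
      intro v hv
      have hTv : T v = μ • v := Module.End.mem_eigenspace_iff.mp hv
      have h1 : ⟪v, T x⟫_ℂ = starRingEnd ℂ μ * ⟪v, x⟫_ℂ := by
        rw [← inner_smul_left, ← hTv]
        exact (hs v x).symm
      rw [h1]
      by_cases hv0 : v = 0
      · simp [hv0]
      have hev : Module.End.HasEigenvalue (T : H →ₗ[ℂ] H) μ :=
        Module.End.hasEigenvalue_of_hasEigenvector ⟨hv, hv0⟩
      have hre : ((μ.re : ℝ) : ℂ) = μ := Complex.conj_eq_iff_re.mp (hs.conj_eigenvalue_eq_self hev)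
      have hnn : 0 ≤ μ.re := by
        refine eigenvalue_nonneg_of_nonneg (T := (T : H →ₗ[ℂ] H)) (by simpa [hre] using hev) ?_
        intro y
        exact hp.re_inner_nonneg_right y
      rcases hnn.eq_or_lt with h0 | hpos
      · rw [← hre, ← h0]; simp
      · rw [hxE ⟨μ.re, hpos⟩ v (by simpa [hre] using hv), mul_zero]
    rwa [ContinuousLinearMap.orthogonalComplement_iSup_eigenspaces_eq_bot hc hs,
      Submodule.mem_bot] at key

/-! ### Eigenvalues and singular values -/

namespace IsPosEigenbasis

variable {ι : Type*} {T : H →L[ℂ] H} {b : ι → H} {ν : ι → ℝ}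

theorem reindex (h : IsPosEigenbasis T b ν) {κ : Type*} {ν' : κ → ℝ} (e : κ ≃ ι)
    (he : ∀ i, ν (e i) = ν' i) : IsPosEigenbasis T (b ∘ e) ν' where
  orthonormal := h.orthonormal.comp _ e.injective
  pos i := he i ▸ h.pos _
  apply_eq i := he i ▸ h.apply_eq _
  apply_eq_zero x hx := h.apply_eq_zero x fun i => by simpa using hx (e.symm i)

/-- Pythagoras for finite linear combinations of the eigenvectors. -/
theorem norm_sum_sq (h : IsPosEigenbasis T b ν) (s : Finset ι) (a : s → ℂ) :
    ‖∑ i, a i • b i‖ ^ 2 = ∑ i, ‖a i‖ ^ 2 := by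
  have ho : Orthonormal ℂ (fun i : s => b i) := h.orthonormal.comp _ Subtype.val_injective
  have := ho.inner_sum a a Finset.univ
  rw [inner_self_eq_norm_sq_to_K] at this
  simp only [Complex.conj_mul', Complex.coe_algebraMap] at this
  exact_mod_cast this

/-- Compactness of `T` makes the positive eigenvalues accumulate only at `0`: the vectors `T (b i)`
with `c < ν i` are `c`-separated inside a totally bounded set. -/
theorem finite_lt (h : IsPosEigenbasis T b ν) (hc : IsCompactOperator T) {c : ℝ} (hc0 : 0 < c) :
    {i | c < ν i}.Finite := by
  obtain ⟨K, hK, hsub⟩ := hc.image_closedBall_subset_compact 1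
  obtain ⟨t, ht, htK⟩ := Metric.totallyBounded_iff.mp hK.totallyBounded (c / 2) (half_pos hc0)
  have hmem : ∀ i, ∃ y ∈ t, dist (T (b i)) y < c / 2 := by
    intro i
    have : T (b i) ∈ K := hsub ⟨b i, by simp [h.orthonormal.1 i], rfl⟩
    simpa using htK this
  choose y hyt hy using hmem
  refine Set.Finite.of_finite_image (f := y) (ht.subset ?_) ?_
  · rintro _ ⟨i, -, rfl⟩; exact hyt i
  · intro i hi j hj hij
    by_contra hne
    have hd : dist (T (b i)) (T (b j)) < c := by
      calc _ ≤ dist (T (b i)) (y i) + dist (T (b j)) (y i) := dist_triangle_right _ _ _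
        _ < c := by have := hy i; have := hy j; rw [← hij] at this; linarith
    have hle : ν i ≤ ‖T (b i) - T (b j)‖ := by
      have h1 : ⟪b i, T (b i) - T (b j)⟫_ℂ = ν i := by
        rw [h.apply_eq, h.apply_eq, inner_sub_right, inner_smul_right, inner_smul_right,
          h.orthonormal.2 hne, inner_self_eq_norm_sq_to_K, h.orthonormal.1]
        simp
      have h2 := norm_inner_le_norm (𝕜 := ℂ) (b i) (T (b i) - T (b j))
      rw [h1, h.orthonormal.1, one_mul, Complex.norm_real, Real.norm_eq_abs] at h2
      exact (le_abs_self _).trans h2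
    rw [← dist_eq_norm] at hle
    exact absurd (lt_of_lt_of_le hi hle) (not_lt.mpr hd.le)

/-- The lower half of the min-max principle: an operator `F` of rank at most `k` kills a nonzero
vector in the span of more than `k` eigenvectors, and on this span `T` expands by at least `m`. -/
theorem le_norm_sub (h : IsPosEigenbasis T b ν) {s : Finset ι} {m : ℝ} (hm : 0 ≤ m)
    (hs : ∀ i ∈ s, m ≤ ν i) {F : H →L[ℂ] H} {k : ℕ}
    (hF : Module.rank ℂ (LinearMap.range (F : H →ₗ[ℂ] H)) ≤ k) (hk : k < s.card) :
    m ≤ ‖T - F‖ := by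
  have hfd : FiniteDimensional ℂ (LinearMap.range (F : H →ₗ[ℂ] H)) :=
    Module.rank_lt_aleph0_iff.mp (hF.trans_lt Cardinal.natCast_lt_aleph0)
  have hrk : Module.finrank ℂ (LinearMap.range (F : H →ₗ[ℂ] H)) ≤ k :=
    Module.finrank_le_of_rank_le hF
  let g : (s → ℂ) →ₗ[ℂ] H := Fintype.linearCombination ℂ (fun i : s => b i)
  have hker : LinearMap.ker ((F : H →ₗ[ℂ] H).rangeRestrict ∘ₗ g) ≠ ⊥ :=
    LinearMap.ker_ne_bot_of_finrank_lt (by simpa using hrk.trans_lt hk)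
  obtain ⟨a, ha, ha0⟩ := Submodule.exists_mem_ne_zero_of_ne_bot hker
  have hg : g a = ∑ i : s, a i • b i := Fintype.linearCombination_apply ..
  have hFg : F (g a) = 0 := congrArg Subtype.val (LinearMap.mem_ker.mp ha)
  have hTg : T (g a) = ∑ i : s, ((ν i : ℂ) * a i) • b i := by
    rw [hg, map_sum]
    refine Finset.sum_congr rfl fun i _ => ?_
    rw [map_smul, h.apply_eq, smul_smul, mul_comm]
  have hn1 : ‖g a‖ ^ 2 = ∑ i, ‖a i‖ ^ 2 := hg ▸ h.norm_sum_sq s a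
  have hn2 : ‖T (g a)‖ ^ 2 = ∑ i : s, (ν i * ‖a i‖) ^ 2 := by
    rw [hTg, h.norm_sum_sq s (fun i => (ν i : ℂ) * a i)]
    refine Finset.sum_congr rfl fun i _ => ?_
    rw [norm_mul, Complex.norm_real, Real.norm_eq_abs, abs_of_pos (h.pos i)]
  have hpos : 0 < ‖g a‖ := by
    obtain ⟨i, hi⟩ := Function.ne_iff.mp ha0
    have : 0 < ‖g a‖ ^ 2 := by
      rw [hn1]
      exact Finset.sum_pos' (fun _ _ => by positivity)
        ⟨i, Finset.mem_univ _, by have := norm_pos_iff.mpr hi; positivity⟩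
    exact lt_of_le_of_ne (norm_nonneg _) fun h0 => by rw [← h0] at this; simp at this
  have hlow : m * ‖g a‖ ≤ ‖T (g a)‖ := by
    refine le_of_sq_le_sq ?_ (norm_nonneg _)
    rw [mul_pow, hn1, hn2, Finset.mul_sum]
    refine Finset.sum_le_sum fun i _ => ?_
    rw [← mul_pow]
    have := hs i i.2
    gcongr
  have hup : ‖T (g a)‖ ≤ ‖T - F‖ * ‖g a‖ := by
    simpa [hFg] using (T - F).le_opNorm (g a)
  exact le_of_mul_le_mul_right (hlow.trans hup) hpos

variable [CompleteSpace H]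

/-- The isometry `ℓ²(ι) → H` carrying the standard basis to the eigenvectors `b`. -/
noncomputable def isom (h : IsPosEigenbasis T b ν) : lp (fun _ : ι => ℂ) 2 →L[ℂ] H :=
  h.orthonormal.orthogonalFamily.linearIsometry.toContinuousLinearMap

theorem adjoint_isom_comp (h : IsPosEigenbasis T b ν) :
    h.isom.adjoint ∘L h.isom = ContinuousLinearMap.id ℂ _ :=
  ContinuousLinearMap.norm_map_iff_adjoint_comp_self _ |>.mp
    h.orthonormal.orthogonalFamily.linearIsometry.norm_map

theorem isom_single [DecidableEq ι] (h : IsPosEigenbasis T b ν) (i : ι) :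
    h.isom (lp.single 2 i 1) = b i :=
  (h.orthonormal.orthogonalFamily.linearIsometry_apply_single (i := i) (1 : ℂ)).trans
    (by simp)

theorem adjoint_isom_apply (h : IsPosEigenbasis T b ν) (x : H) (i : ι) :
    h.isom.adjoint x i = ⟪b i, x⟫_ℂ := by
  classical
  have := lp.inner_single_left (𝕜 := ℂ) i (1 : ℂ) (h.isom.adjoint x)
  rw [ContinuousLinearMap.adjoint_inner_right, h.isom_single] at this
  simpa using this.symm

theorem adjoint_isom_apply_T (h : IsPosEigenbasis T b ν) (hs : (T : H →ₗ[ℂ] H).IsSymmetric)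
    (x : H) (i : ι) :
    h.isom.adjoint (T x) i = ν i * h.isom.adjoint x i := by
  rw [adjoint_isom_apply, adjoint_isom_apply]
  have : ⟪T (b i), x⟫_ℂ = ⟪b i, T x⟫_ℂ := hs (b i) x
  rw [← this, h.apply_eq, inner_smul_left, Complex.conj_ofReal]

/-- The range projection `J J*` of `J = h.isom` can be absorbed on the right of `T`, since `T`
vanishes on the orthogonal complement of `b`. -/
theorem comp_proj (h : IsPosEigenbasis T b ν) : T ∘L h.isom ∘L h.isom.adjoint = T := by
  ext x
  have h0 : T (x - h.isom (h.isom.adjoint x)) = 0 := by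
    refine h.apply_eq_zero _ fun i => ?_
    have hJ := congrArg (fun A => A (h.isom.adjoint x)) h.adjoint_isom_comp
    simp only [ContinuousLinearMap.comp_apply, ContinuousLinearMap.id_apply] at hJ
    rw [← h.adjoint_isom_apply, map_sub, hJ, sub_self]
    rfl
  rw [map_sub, sub_eq_zero] at h0
  exact h0.symm

theorem proj_comp (h : IsPosEigenbasis T b ν) (hs : IsSelfAdjoint T) :
    h.isom ∘L h.isom.adjoint ∘L T = T := by
  have := congrArg ContinuousLinearMap.adjoint h.comp_proj
  rw [ContinuousLinearMap.adjoint_comp, ContinuousLinearMap.adjoint_comp,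
    ContinuousLinearMap.adjoint_adjoint, hs.adjoint_eq] at this
  exact this

/-- Off the eigenvectors with eigenvalue above `c`, the operator `T` has norm at most `c`: compare
the `ℓ²` coordinates `ν i * ⟪b i, y⟫` of `T y` with `c * ⟪b i, y⟫`. -/
theorem norm_apply_le (h : IsPosEigenbasis T b ν) (hp : T.IsPositive) {c : ℝ} (hc : 0 ≤ c)
    {y : H} (hy : ∀ i, c < ν i → ⟪b i, y⟫_ℂ = 0) : ‖T y‖ ≤ c * ‖y‖ := by
  have hn : ∀ z, ‖h.isom z‖ = ‖z‖ := h.orthonormal.orthogonalFamily.linearIsometry.norm_map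
  have hT : h.isom (h.isom.adjoint (T y)) = T y :=
    congrArg (fun A => A y) (h.proj_comp hp.isSelfAdjoint)
  have h1 : ‖h.isom.adjoint (T y)‖ ≤ ‖(c : ℂ) • h.isom.adjoint y‖ := by
    refine lp.norm_mono (by norm_num) fun i => ?_
    rw [h.adjoint_isom_apply_T hp.isSymmetric, lp.coeFn_smul, Pi.smul_apply, smul_eq_mul,
      norm_mul, norm_mul, Complex.norm_real, Complex.norm_real, Real.norm_of_nonneg hc,
      Real.norm_of_nonneg (h.pos i).le]
    by_cases hi : c < ν i
    · rw [h.adjoint_isom_apply, hy i hi]; simp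
    · have := not_lt.mp hi
      gcongr
  have h2 : ‖h.isom.adjoint y‖ ≤ ‖y‖ := by
    have hle : ‖h.isom.adjoint‖ ≤ 1 := by
      rw [LinearIsometryEquiv.norm_map]
      exact h.isom.opNorm_le_bound zero_le_one fun z => by rw [hn, one_mul]
    simpa using h.isom.adjoint.le_of_opNorm_le hle y
  rw [norm_smul, Complex.norm_real, Real.norm_of_nonneg hc] at h1
  rw [← hT, hn]
  exact h1.trans (by gcongr)

/-- Singular values determine the eigenvalue counting function. If at most `k` eigenvalues
exceed `c`, then `T` compressed to their eigenvectors is an approximant of rank at most `k` with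
error at most `c`; otherwise `le_norm_sub` applies. -/
theorem lt_sval_iff (h : IsPosEigenbasis T b ν) (hp : T.IsPositive) (hT : IsCompactOperator T)
    {c : ℝ} (hc : 0 < c) (k : ℕ) : c < sval T k ↔ k < {i | c < ν i}.ncard := by
  have hfin := h.finite_lt hT hc
  constructor
  · contrapose!
    intro hk
    let K : Submodule ℂ H := Submodule.span ℂ (b '' {i | c < ν i})
    have : FiniteDimensional ℂ K := FiniteDimensional.span_of_finite ℂ (hfin.image b)
    have hKr : Module.rank ℂ K ≤ k := by
      refine (rank_span_le _).trans ?_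
      rw [← Set.cast_ncard (hfin.image b)]
      exact_mod_cast (Set.ncard_image_le hfin).trans hk
    have hrank : Module.rank ℂ
        (LinearMap.range ((T ∘L K.starProjection : H →L[ℂ] H) : H →ₗ[ℂ] H)) ≤ k := by
      refine le_trans (Submodule.rank_mono ?_)
        ((rank_map_le (T : H →ₗ[ℂ] H) K).trans hKr)
      rintro _ ⟨x, rfl⟩
      exact ⟨_, K.starProjection_apply_mem x, rfl⟩
    have hnorm : ‖T - T ∘L K.starProjection‖ ≤ c := by
      refine ContinuousLinearMap.opNorm_le_bound _ hc.le fun x => ?_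
      have hx : (T - T ∘L K.starProjection) x = T (x - K.starProjection x) := by simp
      rw [hx]
      have ho := K.sub_starProjection_mem_orthogonal x
      refine (h.norm_apply_le hp hc.le fun i hi => ?_).trans ?_
      · exact (Submodule.mem_orthogonal _ _).mp ho _
          (Submodule.subset_span (Set.mem_image_of_mem b hi))
      · have hle : ‖x - K.starProjection x‖ ≤ ‖x‖ := by
          rw [← Submodule.starProjection_orthogonal_val]
          exact Kᗮ.norm_starProjection_apply_le x
        gcongr
    have hle : sval T k ≤ ‖T - T ∘L K.starProjection‖ := by
      refine csInf_le ⟨0, ?_⟩ ⟨_, hrank, rfl⟩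
      rintro _ ⟨F, -, rfl⟩
      exact norm_nonneg _
    exact hle.trans hnorm
  · intro hk
    have hne : hfin.toFinset.Nonempty := by
      rw [← Finset.card_pos, ← Set.ncard_eq_toFinset_card _ hfin]; omega
    -- The smallest of the finitely many eigenvalues above `c` is a lower bound for the singular
    -- value that is still strictly above `c`.
    obtain ⟨j, hj, hmin⟩ := hfin.toFinset.exists_min_image ν hne
    refine lt_of_lt_of_le (b := ν j) (by simpa using hj) (le_csInf ⟨_, 0, ?_, rfl⟩ ?_)
    · simp
    · rintro _ ⟨F, hF, rfl⟩
      exact h.le_norm_sub (h.pos j).le hmin hF (by rwa [← Set.ncard_eq_toFinset_card _ hfin])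

end IsPosEigenbasis

end

/-! ### Matching the eigenvalues -/

/-- Just below `l` there are no values of `ν`, so the counting function there sees only the fibre
over `l` and the values above it. -/
theorem eventually_ncard_lt_eq {ι : Type*} {ν : ι → ℝ}
    (hf : ∀ c, 0 < c → {i | c < ν i}.Finite) {l : ℝ} (hl : 0 < l) :
    ∀ᶠ c in 𝓝[<] l, {i | c < ν i}.ncard = {i | ν i = l}.ncard + {i | l < ν i}.ncard := by
  have hfin := hf (l / 2) (half_pos hl)
  have hgap : ∀ᶠ c in 𝓝[<] l, ∀ i ∈ {i | l / 2 < ν i}, ν i < l → ν i < c := by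
    refine (Filter.eventually_all_finite hfin).mpr fun i _ => ?_
    by_cases hi : ν i < l
    · filter_upwards [Ioo_mem_nhdsLT hi] with c hc _ using hc.1
    · exact Filter.Eventually.of_forall fun c h => absurd h hi
  filter_upwards [hgap, Ioo_mem_nhdsLT (half_lt_self hl)] with c hc hcl
  rw [← Set.ncard_union_eq ?_ ?_ ?_]
  · congr 1
    ext i
    constructor
    · intro (hi : c < ν i)
      rcases lt_trichotomy (ν i) l with h | h | h
      · exact absurd (hc i (hcl.1.trans hi) h) hi.not_gt
      · exact Or.inl h
      · exact Or.inr h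
    · rintro (hi | hi)
      · exact hcl.2.trans_eq (Eq.symm hi)
      · exact hcl.2.trans hi
  · exact Set.disjoint_left.mpr fun i (h : ν i = l) (h' : l < ν i) => h'.ne' h
  · exact hfin.subset fun i (h : ν i = l) => (half_lt_self hl).trans_eq h.symm
  · exact hf l hl

theorem ncard_fiber_eq {ι₁ ι₂ : Type*} {ν₁ : ι₁ → ℝ} {ν₂ : ι₂ → ℝ}
    (hf₁ : ∀ c, 0 < c → {i | c < ν₁ i}.Finite) (hf₂ : ∀ c, 0 < c → {i | c < ν₂ i}.Finite)
    (hcard : ∀ c, 0 < c → {i | c < ν₁ i}.ncard = {i | c < ν₂ i}.ncard) {l : ℝ} (hl : 0 < l) :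
    {i | ν₁ i = l}.ncard = {i | ν₂ i = l}.ncard := by
  obtain ⟨c, h₁, h₂, hc⟩ := ((eventually_ncard_lt_eq hf₁ hl).and
    ((eventually_ncard_lt_eq hf₂ hl).and (Ioo_mem_nhdsLT hl))).exists
  have := hcard c hc.1
  have := hcard l hl
  omega

/-- Two positive families accumulating only at `0` with the same counting function are
rearrangements of each other. -/
theorem exists_equiv {ι₁ ι₂ : Type*} {ν₁ : ι₁ → ℝ} {ν₂ : ι₂ → ℝ}
    (hp₁ : ∀ i, 0 < ν₁ i) (hp₂ : ∀ i, 0 < ν₂ i)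
    (hf₁ : ∀ c, 0 < c → {i | c < ν₁ i}.Finite) (hf₂ : ∀ c, 0 < c → {i | c < ν₂ i}.Finite)
    (hcard : ∀ c, 0 < c → {i | c < ν₁ i}.ncard = {i | c < ν₂ i}.ncard) :
    ∃ e : ι₁ ≃ ι₂, ∀ i, ν₂ (e i) = ν₁ i := by
  have hfib : ∀ l, Nonempty ({i // ν₁ i = l} ≃ {i // ν₂ i = l}) := by
    intro l
    rcases le_or_gt l 0 with hl | hl
    · have : IsEmpty {i // ν₁ i = l} := ⟨fun i => by have := hp₁ i; rw [i.2] at this; linarith⟩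
      have : IsEmpty {i // ν₂ i = l} := ⟨fun i => by have := hp₂ i; rw [i.2] at this; linarith⟩
      exact ⟨Equiv.equivOfIsEmpty _ _⟩
    · have h1 : Finite {i // ν₁ i = l} := (hf₁ (l / 2) (half_pos hl)).subset
        fun i (hi : ν₁ i = l) => by simp only [Set.mem_ofPred_eq]; linarith
      have h2 : Finite {i // ν₂ i = l} := (hf₂ (l / 2) (half_pos hl)).subset
        fun i (hi : ν₂ i = l) => by simp only [Set.mem_ofPred_eq]; linarith
      exact Finite.card_eq.mp (ncard_fiber_eq hf₁ hf₂ hcard hl)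
  exact ⟨Equiv.ofFiberEquiv fun l => (hfib l).some, fun i => Equiv.ofFiberEquiv_map _ i⟩

/-! ### Conjugation by a partial isometry -/

/-- Positive operators with the same eigenvalues are conjugate by the partial isometry `V = J₂ J₁*`
(with `W = V*`) that maps the eigenvectors of `T₁` to those of `T₂`. -/
theorem exists_conj {H : Type*} [NormedAddCommGroup H] [InnerProductSpace ℂ H] [CompleteSpace H]
    {T₁ T₂ : H →L[ℂ] H} {ι : Type*} {b₁ b₂ : ι → H} {ν : ι → ℝ}
    (h₁ : IsPosEigenbasis T₁ b₁ ν) (h₂ : IsPosEigenbasis T₂ b₂ ν)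
    (hp₁ : T₁.IsPositive) (hp₂ : T₂.IsPositive) :
    ∃ V W : H →L[ℂ] H, V * T₁ * W = T₂ ∧ W * (V * T₁) = T₁ := by
  -- Both sides are the diagonal operator with entries `ν` on `ℓ²(ι)`.
  have hD : h₁.isom.adjoint ∘L T₁ ∘L h₁.isom = h₂.isom.adjoint ∘L T₂ ∘L h₂.isom := by
    ext x : 1
    apply lp.ext
    funext i
    have e₁ := congrArg (fun A => A x) h₁.adjoint_isom_comp
    have e₂ := congrArg (fun A => A x) h₂.adjoint_isom_comp
    simp only [ContinuousLinearMap.comp_apply, ContinuousLinearMap.id_apply] at e₁ e₂ ⊢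
    rw [h₁.adjoint_isom_apply_T hp₁.isSymmetric, h₂.adjoint_isom_apply_T hp₂.isSymmetric, e₁, e₂]
  refine ⟨h₂.isom ∘L h₁.isom.adjoint, h₁.isom ∘L h₂.isom.adjoint, ?_, ?_⟩
  · calc _ = h₂.isom ∘L (h₁.isom.adjoint ∘L T₁ ∘L h₁.isom) ∘L h₂.isom.adjoint := rfl
      _ = h₂.isom ∘L h₂.isom.adjoint ∘L (T₂ ∘L h₂.isom ∘L h₂.isom.adjoint) := by rw [hD]; rfl
      _ = T₂ := by rw [h₂.comp_proj, h₂.proj_comp hp₂.isSelfAdjoint]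
  · calc _ = h₁.isom ∘L (h₂.isom.adjoint ∘L h₂.isom) ∘L h₁.isom.adjoint ∘L T₁ := rfl
      _ = T₁ := by
        rw [h₂.adjoint_isom_comp, ContinuousLinearMap.id_comp, h₁.proj_comp hp₁.isSelfAdjoint]

/-! ### Invariance of the trace -/

/-- if `φ` is a trace (a linear functional with `φ(TS) = φ(ST)`) on a
two-sided ideal `I` of compact operators on a separable Hilbert space, and
`T₁, T₂ ∈ I` are positive with the same singular value sequences, then `φ(T₁) = φ(T₂)`. -/
theorem stmt2 {H : Type*} [NormedAddCommGroup H] [InnerProductSpace ℂ H] [CompleteSpace H]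
    [TopologicalSpace.SeparableSpace H]
    (I : Submodule ℂ (H →L[ℂ] H))
    (hIl : ∀ S T : H →L[ℂ] H, T ∈ I → S * T ∈ I)
    (hIr : ∀ S T : H →L[ℂ] H, T ∈ I → T * S ∈ I)
    (hIc : ∀ T : H →L[ℂ] H, T ∈ I → IsCompactOperator T)
    (φ : I →ₗ[ℂ] ℂ)
    (hφ : ∀ (T : H →L[ℂ] H) (hT : T ∈ I) (S : H →L[ℂ] H),
      φ ⟨T * S, hIr S T hT⟩ = φ ⟨S * T, hIl S T hT⟩)
    (T₁ T₂ : H →L[ℂ] H) (hT₁ : T₁ ∈ I) (hT₂ : T₂ ∈ I)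
    (hpos₁ : T₁.IsPositive) (hpos₂ : T₂.IsPositive)
    (hμ : ∀ k, sval T₁ k = sval T₂ k) :
    φ ⟨T₁, hT₁⟩ = φ ⟨T₂, hT₂⟩ := by
  obtain ⟨ι₁, b₁, ν₁, h₁⟩ := exists_isPosEigenbasis (hIc _ hT₁) hpos₁
  obtain ⟨ι₂, b₂, ν₂, h₂⟩ := exists_isPosEigenbasis (hIc _ hT₂) hpos₂
  have hcard : ∀ c, 0 < c → {i | c < ν₁ i}.ncard = {i | c < ν₂ i}.ncard := fun c hc =>
    eq_of_forall_lt_iff fun k => by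
      rw [← h₁.lt_sval_iff hpos₁ (hIc _ hT₁) hc, ← h₂.lt_sval_iff hpos₂ (hIc _ hT₂) hc, hμ]
  obtain ⟨e, he⟩ := exists_equiv h₁.pos h₂.pos (fun c => h₁.finite_lt (hIc _ hT₁))
    (fun c => h₂.finite_lt (hIc _ hT₂)) hcard
  obtain ⟨V, W, hVW, hWV⟩ := exists_conj h₁ (h₂.reindex e he) hpos₁ hpos₂
  have key := hφ (V * T₁) (hIl V T₁ hT₁) W
  simp only [hVW, hWV] at key
  exact key.symm
end

section
/- If K ∈ W^{2d+2,1}([0,1]^d × [0,1]^d) and T : L₂((0,1)^d) → L₂((0,1)^d) is the integral operator with kernel K, then T is trace class and ‖T‖₁ ≤ c_d ‖K‖_{W^{2d+2,1}} for a constant c_d depending only on d. -/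
/-!
The singular values are estimated with the orthonormal basis of `L²([0,1]^d)` made of products of
shifted Legendre polynomials, which, unlike the trigonometric basis, needs no extension of the
kernel beyond the cube.

Let `L = ∑ i, -∂_i (t_i (1 - t_i) ∂_i)` act in the first variable `t` of a kernel. The weight
`t_i (1 - t_i)` vanishes on the faces `t_i = 0` and `t_i = 1`, so `L` is symmetric on the cube for
*all* smooth functions, without boundary terms. The product Legendre polynomial with multi-index
`α` is an eigenfunction with eigenvalue `λ_α = ∑ i, α_i (α_i + 1)`. Hence the `α`-th coefficient of
`T ξ` is `λ_α ^ (-j)` times that of the operator `T_j` with kernel `L^j K` applied to `ξ`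
(`integral_lap_iterate_mul_prodLeg`, `inner_legLp_integralOp`). Outside the `N ^ d` indices `α` with
all `α_i < N` one has `λ_α ≥ N ^ 2`, so projecting onto those indices shows that the `k`-th singular
value is at most `N ^ (-2 j) ‖T_j‖` whenever `N ^ d ≤ k` (`sval_le_of_basis`, `sval_le_of_kernel`).

The operator norm of `T_j` is at most the `L²`-norm of `f = L^j K`, and that norm is controlled with
only `d` further derivatives in `L¹`: by the fundamental theorem of calculus in each coordinate,
`|f (t, s)|` is bounded both by a function of `s` alone and by a function of `t` alone, each having
integral at most `2 ^ d ‖f‖_{W^{d,1}}`; the integral of `|f|²` is at most that of the product of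
these two functions (`lintegral_sq_le`).

With `j = (d + 2) / 2` (integer division), `2 j` is `d + 1` or `d + 2`. So `d + 2 j ≤ 2 d + 2`
derivatives suffice, while `N ^ (-2 j)` with `N ≈ k ^ (1 / d)` is at most of the order of
`k ^ (-(d + 1) / d)`, which is summable (`exists_summable_bound`).
-/

open MeasureTheory

/-- The unit cube `[0,1]^d` in `ℝ^d`. -/
def cube (d : ℕ) : Set (EuclideanSpace ℝ (Fin d)) :=
  {t | ∀ i, t i ∈ Set.Icc (0 : ℝ) 1}

/-- Lebesgue measure restricted to the unit cube. -/
noncomputable def μcube (d : ℕ) : Measure (EuclideanSpace ℝ (Fin d)) :=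
  volume.restrict (cube d)

/-- The `W^{m,1}`-Sobolev norm of a kernel on the product of two cubes: the sum of the
`L¹`-norms over `[0,1]^d × [0,1]^d` of all derivatives of order `≤ m`. -/
noncomputable def sobNorm (d m : ℕ)
    (K : EuclideanSpace ℝ (Fin d) × EuclideanSpace ℝ (Fin d) → ℂ) : ℝ :=
  ∑ j ∈ Finset.range (m + 1), ∫ p in (cube d) ×ˢ (cube d), ‖iteratedFDeriv ℝ j K p‖

/-! ### Singular values and basis coefficients -/

lemma sval_bddBelow {H : Type*} [NormedAddCommGroup H] [InnerProductSpace ℂ H]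
    [CompleteSpace H] (T : H →L[ℂ] H) (k : ℕ) :
    BddBelow {c : ℝ | ∃ F : H →L[ℂ] H,
      Module.rank ℂ (LinearMap.range (F : H →ₗ[ℂ] H)) ≤ k ∧ ‖T - F‖ = c} :=
  ⟨0, by rintro c ⟨F, -, rfl⟩; exact norm_nonneg _⟩

lemma sval_nonneg {H : Type*} [NormedAddCommGroup H] [InnerProductSpace ℂ H]
    [CompleteSpace H] (T : H →L[ℂ] H) (k : ℕ) : 0 ≤ sval T k :=
  Real.sInf_nonneg (by rintro c ⟨F, -, rfl⟩; exact norm_nonneg _)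

/-- If outside a set `A` of at most `k` indices the coefficients of `T ξ` in an orthonormal basis
are dominated by `c` times those of a vector of norm at most `M * ‖ξ‖`, then `sval T k ≤ c * M`. -/
lemma sval_le_of_basis {H ι : Type*} [NormedAddCommGroup H] [InnerProductSpace ℂ H]
    [CompleteSpace H] (b : HilbertBasis ι ℂ H) (A : Finset ι) (T : H →L[ℂ] H) (k : ℕ)
    (hA : A.card ≤ k) (c M : ℝ) (hc : 0 ≤ c) (hM : 0 ≤ M)
    (h : ∀ ξ : H, ∃ w : H, ‖w‖ ≤ M * ‖ξ‖ ∧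
      ∀ α ∉ A, ‖inner ℂ (b α) (T ξ)‖ ≤ c * ‖inner ℂ (b α) w‖) :
    sval T k ≤ c * M := by
  classical
  -- the finite-rank approximant is the projection of `T` onto the span of the `b α`, `α ∈ A`
  let F : H →L[ℂ] H := ∑ α ∈ A, ((innerSL ℂ (b α)).comp T).smulRight (b α)
  have hF : ∀ ξ, F ξ = ∑ α ∈ A, inner ℂ (b α) (T ξ) • b α := by
    intro ξ; simp [F]
  have hrank : Module.rank ℂ (LinearMap.range (F : H →ₗ[ℂ] H)) ≤ k := by
    have hsub : LinearMap.range (F : H →ₗ[ℂ] H) ≤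
        Submodule.span ℂ ((A.image b : Finset H) : Set H) := by
      rintro _ ⟨ξ, rfl⟩
      simp only [ContinuousLinearMap.coe_coe, hF]
      exact Submodule.sum_mem _ fun α hα => Submodule.smul_mem _ _
        (Submodule.subset_span (by simpa using ⟨α, hα, rfl⟩))
    calc _ ≤ Module.rank ℂ (Submodule.span ℂ ((A.image b : Finset H) : Set H)) :=
          Submodule.rank_mono hsub
      _ ≤ ((A.image b).card : Cardinal) := rank_span_finset_le _
      _ ≤ k := by exact_mod_cast Finset.card_image_le.trans hA
  refine (csInf_le (sval_bddBelow T k) ⟨F, hrank, rfl⟩).trans ?_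
  refine ContinuousLinearMap.opNorm_le_bound _ (by positivity) fun ξ => ?_
  obtain ⟨w, hw, hc'⟩ := h ξ
  -- compare the squared norms coefficientwise, by Parseval
  have parseval : ∀ x : H, HasSum (fun α => ‖inner ℂ (b α) x‖ ^ 2) (‖x‖ ^ 2) := by
    intro x
    have h1 := b.hasSum_inner_mul_inner x x
    have h2 := (Complex.hasSum_iff _ _).1 h1 |>.1
    convert h2 using 1
    · funext α
      rw [← inner_conj_symm x (b α), ← Complex.normSq_eq_conj_mul_self, Complex.ofReal_re,
        Complex.normSq_eq_norm_sq]
    · rw [inner_self_eq_norm_sq_to_K]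
      norm_cast
  have hcoef : ∀ α, ‖inner ℂ (b α) ((T - F) ξ)‖ ^ 2 ≤ c ^ 2 * ‖inner ℂ (b α) w‖ ^ 2 := by
    intro α
    have hFa : inner ℂ (b α) (F ξ) = if α ∈ A then inner ℂ (b α) (T ξ) else 0 := by
      rw [hF, inner_sum]
      simp only [inner_smul_right, orthonormal_iff_ite.1 b.orthonormal]
      simp
    rw [sub_apply, inner_sub_right, hFa, ← mul_pow]
    by_cases hα : α ∈ A
    · simpa [hα] using sq_nonneg (c * ‖inner ℂ (b α) w‖)
    · simp only [hα, if_false, sub_zero]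
      exact pow_le_pow_left₀ (norm_nonneg _) (hc' α hα) 2
  have hsq : ‖(T - F) ξ‖ ^ 2 ≤ c ^ 2 * ‖w‖ ^ 2 :=
    hasSum_le hcoef (parseval _) ((parseval w).mul_left _)
  have : ‖(T - F) ξ‖ ≤ c * ‖w‖ := by
    rw [← mul_pow] at hsq
    exact le_of_sq_le_sq hsq (by positivity)
  calc _ ≤ c * ‖w‖ := this
    _ ≤ c * (M * ‖ξ‖) := by gcongr
    _ = _ := by ring

/-- A sequence with `a k ≤ N ^ (-2 j) * M` whenever `N ^ d ≤ k`, where `2 j ∈ {d + 1, d + 2}`, is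
dominated by `M` times a summable sequence depending only on `d`: take `N = ⌊k ^ (1 / d)⌋`, and
`N = k` when `d = 0`. -/
lemma exists_summable_bound (d : ℕ) : ∃ b : ℕ → ℝ, Summable b ∧ (∀ k, 0 ≤ b k) ∧
    ∀ (a : ℕ → ℝ) (M : ℝ), 0 ≤ M → a 0 ≤ M →
      (∀ k N : ℕ, 1 ≤ N → N ^ d ≤ k → a k ≤ 1 / (N : ℝ) ^ (2 * ((d + 2) / 2)) * M) →
      ∀ k, a k ≤ b k * M := by
  rcases Nat.eq_zero_or_pos d with rfl | hd
  · refine ⟨fun k => if k = 0 then 1 else 1 / (k : ℝ) ^ 2, ?_, ?_, ?_⟩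
    · rw [← summable_nat_add_iff 1]
      have := (summable_nat_add_iff 1).2 (Real.summable_one_div_nat_pow.2 (one_lt_two))
      simpa using this
    · intro k; dsimp only; split_ifs <;> positivity
    · intro a M hM h0 h k
      dsimp only
      split_ifs with hk
      · subst hk; simpa using h0
      · exact h k k (Nat.one_le_iff_ne_zero.2 hk) (by simpa using Nat.one_le_iff_ne_zero.2 hk)
  · set e : ℝ := ((d : ℝ) + 1) / d with he
    have hd' : (0 : ℝ) < d := by exact_mod_cast hd
    refine ⟨fun k => if k = 0 then 1 else 2 ^ (d + 1) * (1 / (k : ℝ) ^ e), ?_, ?_, ?_⟩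
    · rw [← summable_nat_add_iff 1]
      have h1 : 1 < e := by rw [he, lt_div_iff₀ hd']; linarith
      have := ((summable_nat_add_iff 1).2 (Real.summable_one_div_nat_rpow.2 h1)).mul_left
        ((2 : ℝ) ^ (d + 1))
      simpa using this
    · intro k; dsimp only; split_ifs <;> positivity
    · intro a M hM h0 h k
      dsimp only
      split_ifs with hk
      · subst hk; simpa using h0
      have hk1 : (1 : ℝ) ≤ k := by exact_mod_cast Nat.one_le_iff_ne_zero.2 hk
      -- `x ≤ 2 * N` and `x ^ (d + 1) = k ^ e`, which is where the factor `2 ^ (d + 1)` comes from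
      set x : ℝ := (k : ℝ) ^ (1 / (d : ℝ)) with hx
      have hx1 : 1 ≤ x := Real.one_le_rpow hk1 (by positivity)
      set N := ⌊x⌋₊ with hN
      have hN1 : 1 ≤ N := Nat.le_floor (by simpa using hx1)
      have hNx : (N : ℝ) ≤ x := Nat.floor_le (by linarith)
      have hxN : x ≤ 2 * N := by
        have := (Nat.lt_floor_add_one x).le
        have h1 : (1 : ℝ) ≤ N := by exact_mod_cast hN1
        rw [← hN] at this
        linarith
      have hNk : N ^ d ≤ k := by
        have : (N : ℝ) ^ d ≤ k := by
          calc (N : ℝ) ^ d ≤ x ^ d := by gcongr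
            _ = k := by
              rw [hx, ← Real.rpow_natCast, ← Real.rpow_mul (by positivity)]
              rw [one_div_mul_cancel hd'.ne', Real.rpow_one]
        exact_mod_cast this
      refine (h k N hN1 hNk).trans (mul_le_mul_of_nonneg_right ?_ hM)
      have hNpos : (0 : ℝ) < N := by exact_mod_cast hN1
      have hxe : (k : ℝ) ^ e = x ^ (d + 1) := by
        rw [hx, ← Real.rpow_natCast, ← Real.rpow_mul (by positivity)]
        congr 1
        rw [he]; push_cast; field_simp
      rw [hxe]
      have h2 : (N : ℝ) ^ (d + 1) ≤ (N : ℝ) ^ (2 * ((d + 2) / 2)) :=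
        pow_le_pow_right₀ (by exact_mod_cast hN1) (by omega)
      calc 1 / (N : ℝ) ^ (2 * ((d + 2) / 2)) ≤ 1 / (N : ℝ) ^ (d + 1) := by gcongr
        _ = 2 ^ (d + 1) * (1 / (2 * (N : ℝ)) ^ (d + 1)) := by rw [mul_pow]; field_simp
        _ ≤ _ := by gcongr

/-! ### Shifted Legendre polynomials -/

open Polynomial in
/-- Legendre's differential equation on `[0, 1]`, checked coefficientwise. -/
lemma shiftedLegendre_ode (n : ℕ) :
    -derivative ((X - X ^ 2) * derivative (shiftedLegendre n)) =
      C ((n * (n + 1) : ℕ) : ℤ) * shiftedLegendre n := by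
  ext k
  have key : (shiftedLegendre n).coeff (k + 1) * ((k : ℤ) + 1) ^ 2 =
      -(((n : ℤ) - k) * (n + k + 1)) * (shiftedLegendre n).coeff k := by
    rw [coeff_shiftedLegendre, coeff_shiftedLegendre]
    have h1 : ((n.choose (k + 1) : ℤ)) * (k + 1) = n.choose k * (n - k) := by
      rcases le_or_gt k n with h | h
      · have := Nat.choose_succ_right_eq n k
        zify [h] at this
        exact this
      · simp [Nat.choose_eq_zero_of_lt h, Nat.choose_eq_zero_of_lt (h.trans (Nat.lt_succ_self k))]
    have h2 : (((n + (k + 1)).choose n : ℤ)) * (k + 1) = (n + k).choose n * (n + k + 1) := by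
      have := Nat.choose_mul_succ_eq (n + k) n
      rw [show n + k + 1 - n = k + 1 by omega] at this
      zify at this
      rw [← add_assoc]
      exact this.symm
    calc _ = -(-1) ^ k * (((n.choose (k + 1) : ℤ)) * (k + 1)) *
          ((((n + (k + 1)).choose n : ℤ)) * (k + 1)) := by ring
      _ = _ := by rw [h1, h2]; ring
  rw [coeff_neg, coeff_derivative, coeff_C_mul, sub_mul, coeff_sub, coeff_X_mul, coeff_derivative]
  have h2 : (X ^ 2 * derivative (shiftedLegendre n)).coeff (k + 1) =
      (shiftedLegendre n).coeff k * k := by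
    rcases k with _ | k
    · rw [pow_two, mul_assoc, coeff_X_mul]; simp
    · rw [coeff_X_pow_mul', if_pos (by omega), coeff_derivative]
      simp
  rw [h2]
  push_cast
  linear_combination (-1 : ℤ) * key

open Polynomial in
/-- The shifted Legendre polynomial `P_n (1 - 2 x)`, with complex coefficients. -/
noncomputable def legendreC (n : ℕ) : ℂ[X] := (shiftedLegendre n).map (Int.castRingHom ℂ)

open Polynomial in
lemma legendreC_ode (n : ℕ) :
    -derivative ((X - X ^ 2) * derivative (legendreC n)) =
      C ((n * (n + 1) : ℕ) : ℂ) * legendreC n := by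
  have := congrArg (Polynomial.map (Int.castRingHom ℂ)) (shiftedLegendre_ode n)
  rw [Polynomial.map_neg, ← derivative_map, Polynomial.map_mul, Polynomial.map_sub,
    Polynomial.map_pow, Polynomial.map_X, ← derivative_map, Polynomial.map_mul,
    Polynomial.map_C, eq_intCast, Int.cast_natCast] at this
  exact this

lemma legendreC_degree (n : ℕ) : (legendreC n).degree = n := by
  rw [legendreC, Polynomial.degree_map_eq_of_injective (Int.cast_injective),
    Polynomial.degree_shiftedLegendre]

lemma legendreC_eval_zero (n : ℕ) : (legendreC n).eval 0 = 1 := by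
  rw [← Polynomial.coeff_zero_eq_eval_zero, legendreC, Polynomial.coeff_map,
    Polynomial.coeff_shiftedLegendre]
  simp

lemma legendreC_span : Submodule.span ℂ (Set.range legendreC) = ⊤ := by
  let S : Polynomial.Sequence ℂ := ⟨legendreC, legendreC_degree⟩
  refine S.span fun i => IsUnit.mk0 _ ?_
  rw [Polynomial.leadingCoeff_ne_zero]
  intro h
  have h1 := legendreC_degree i
  rw [show legendreC i = 0 from h] at h1
  simp at h1

/-! ### The Legendre operator -/

/-- The domain of the kernels: pairs `(t, s)` of points of `ℝ^d`. -/
abbrev KDom (d : ℕ) : Type := EuclideanSpace ℝ (Fin d) × EuclideanSpace ℝ (Fin d)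

/-- The `i`-th coordinate direction in the first variable. -/
noncomputable def dirv {d : ℕ} (i : Fin d) : KDom d := (EuclideanSpace.single i 1, 0)

/-- The partial derivative `∂f / ∂t_i` in the first variable of a kernel `f (t, s)`. -/
noncomputable def pd {d : ℕ} (i : Fin d) (f : KDom d → ℂ) : KDom d → ℂ :=
  fun p => fderiv ℝ f p (dirv i)

/-- The weight `t_i (1 - t_i)`, which vanishes on the faces `t_i = 0` and `t_i = 1`. -/
noncomputable def wt {d : ℕ} (i : Fin d) : KDom d → ℂ :=
  fun p => ((p.1 i - (p.1 i) ^ 2 : ℝ) : ℂ)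

/-- The one-coordinate Legendre operator `-∂_i (t_i (1 - t_i) ∂_i f)` in the first variable. -/
noncomputable def leg {d : ℕ} (i : Fin d) (f : KDom d → ℂ) : KDom d → ℂ :=
  fun p => -pd i (fun q => wt i q * pd i f q) p

/-- The Legendre operator `∑ i, -∂_i (t_i (1 - t_i) ∂_i f)` in the first variable. -/
noncomputable def lap {d : ℕ} (f : KDom d → ℂ) : KDom d → ℂ :=
  fun p => ∑ i, leg i f p

/-- The product `∏ j, q_j (t_j)` of one-variable polynomials, as a function of `(t, s)` that does
not depend on `s`. -/
noncomputable def pf {d : ℕ} (q : Fin d → Polynomial ℂ) : KDom d → ℂ :=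
  fun p => ∏ j, (q j).eval ((p.1 j : ℝ) : ℂ)

lemma contDiff_coord {d : ℕ} (i : Fin d) {n : WithTop ℕ∞} :
    ContDiff ℝ n (fun p : KDom d => ((p.1 i : ℝ) : ℂ)) := by
  have h1 : ContDiff ℝ n (fun p : KDom d => p.1 i) :=
    (EuclideanSpace.proj (𝕜 := ℝ) i : EuclideanSpace ℝ (Fin d) →L[ℝ] ℝ).contDiff.comp contDiff_fst
  exact Complex.ofRealCLM.contDiff.comp h1

lemma contDiff_wt {d : ℕ} (i : Fin d) {n : WithTop ℕ∞} : ContDiff ℝ n (wt i) := by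
  have h := contDiff_coord i (n := n)
  have : wt i = fun p : KDom d => ((p.1 i : ℝ) : ℂ) - ((p.1 i : ℝ) : ℂ) ^ 2 := by
    funext p; simp [wt]
  rw [this]
  exact h.sub (h.pow 2)

lemma contDiff_pf {d : ℕ} (q : Fin d → Polynomial ℂ) {n : WithTop ℕ∞} : ContDiff ℝ n (pf q) := by
  unfold pf
  refine contDiff_prod fun j _ => ?_
  have h1 : ContDiff ℝ n (fun z : ℂ => (q j).eval z) := by
    have := (q j).contDiff_aeval (𝕜 := ℂ) (R := ℂ) n
    simpa using this.restrict_scalars ℝ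
  exact h1.comp (contDiff_coord j)

lemma contDiff_pd {d : ℕ} (i : Fin d) {f : KDom d → ℂ} {k : ℕ}
    (hf : ContDiff ℝ ((k + 1 : ℕ) : WithTop ℕ∞) f) : ContDiff ℝ (k : WithTop ℕ∞) (pd i f) := by
  have : ContDiff ℝ (k : WithTop ℕ∞) (fderiv ℝ f) :=
    hf.fderiv_right (by push_cast; exact le_rfl)
  exact this.clm_apply contDiff_const

lemma contDiff_leg {d : ℕ} (i : Fin d) {f : KDom d → ℂ} {k : ℕ}
    (hf : ContDiff ℝ ((k + 2 : ℕ) : WithTop ℕ∞) f) : ContDiff ℝ (k : WithTop ℕ∞) (leg i f) := by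
  refine (contDiff_pd i ?_).neg
  exact (contDiff_wt i).mul (contDiff_pd i hf)

lemma contDiff_lap {d : ℕ} {f : KDom d → ℂ} {k : ℕ}
    (hf : ContDiff ℝ ((k + 2 : ℕ) : WithTop ℕ∞) f) : ContDiff ℝ (k : WithTop ℕ∞) (lap f) := by
  unfold lap
  exact ContDiff.sum fun i _ => contDiff_leg i hf

lemma pd_pf {d : ℕ} (q : Fin d → Polynomial ℂ) (i : Fin d) :
    pd i (pf q) = pf (Function.update q i (Polynomial.derivative (q i))) := by
  funext p
  have hcoord : ∀ j, HasFDerivAt (fun p : KDom d => ((p.1 j : ℝ) : ℂ))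
      (Complex.ofRealCLM.comp ((EuclideanSpace.proj (𝕜 := ℝ) j).comp
        (ContinuousLinearMap.fst ℝ (EuclideanSpace ℝ (Fin d)) (EuclideanSpace ℝ (Fin d))))) p := by
    intro j
    exact ContinuousLinearMap.hasFDerivAt (Complex.ofRealCLM.comp
      ((EuclideanSpace.proj (𝕜 := ℝ) j).comp
        (ContinuousLinearMap.fst ℝ (EuclideanSpace ℝ (Fin d)) (EuclideanSpace ℝ (Fin d)))))
  have hj : ∀ j, HasFDerivAt (fun p : KDom d => (q j).eval ((p.1 j : ℝ) : ℂ))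
      ((Polynomial.derivative (q j)).eval ((p.1 j : ℝ) : ℂ) •
        (Complex.ofRealCLM.comp ((EuclideanSpace.proj (𝕜 := ℝ) j).comp
        (ContinuousLinearMap.fst ℝ (EuclideanSpace ℝ (Fin d)) (EuclideanSpace ℝ (Fin d)))))) p := by
    intro j
    exact ((q j).hasDerivAt _).comp_hasFDerivAt p (hcoord j)
  have := HasFDerivAt.finsetProd (u := Finset.univ) fun j _ => hj j
  unfold pd pf
  rw [this.fderiv]
  simp only [dirv, _root_.sum_apply, _root_.smul_apply, ContinuousLinearMap.comp_apply,
    ContinuousLinearMap.coe_fst', smul_eq_mul]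
  rw [Finset.sum_eq_single i]
  · rw [← Finset.mul_prod_erase _ _ (Finset.mem_univ i), mul_comm]
    simp only [Function.update_self]
    congr 1
    · simp
    · refine Finset.prod_congr rfl fun j hj => ?_
      rw [Function.update_of_ne (Finset.ne_of_mem_erase hj)]
  · intro j _ hji
    simp [hji]
  · simp

lemma wt_mul_pf {d : ℕ} (q : Fin d → Polynomial ℂ) (i : Fin d) :
    (fun p => wt i p * pf q p) =
      pf (Function.update q i ((Polynomial.X - Polynomial.X ^ 2) * q i)) := by
  funext p
  unfold pf
  rw [← Finset.mul_prod_erase _ _ (Finset.mem_univ i),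
    ← Finset.mul_prod_erase _ _ (Finset.mem_univ i), ← mul_assoc]
  congr 1
  · simp [wt]
  · refine Finset.prod_congr rfl fun j hj => ?_
    rw [Function.update_of_ne (Finset.ne_of_mem_erase hj)]

/-- The product `∏ j, P_{α_j} (t_j)` of shifted Legendre polynomials, as a function of `(t, s)`. -/
noncomputable def prodLeg {d : ℕ} (α : Fin d → ℕ) : KDom d → ℂ := pf fun j => legendreC (α j)

lemma leg_prodLeg {d : ℕ} (α : Fin d → ℕ) (i : Fin d) (p : KDom d) :
    leg i (prodLeg α) p = ((α i * (α i + 1) : ℕ) : ℂ) * prodLeg α p := by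
  unfold leg prodLeg
  rw [pd_pf, wt_mul_pf, pd_pf]
  simp only [Function.update_self, Function.update_idem]
  unfold pf
  rw [← Finset.mul_prod_erase _ _ (Finset.mem_univ i),
    ← Finset.mul_prod_erase _ (fun j => Polynomial.eval _ (legendreC (α j))) (Finset.mem_univ i),
    ← mul_assoc, ← neg_mul]
  congr 1
  · rw [Function.update_self, ← Polynomial.eval_neg, legendreC_ode, Polynomial.eval_mul,
      Polynomial.eval_C]
  · refine Finset.prod_congr rfl fun j hj => ?_
    rw [Function.update_of_ne (Finset.ne_of_mem_erase hj)]

/-! ### Sobolev norms of kernels -/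

lemma isCompact_cube (d : ℕ) : IsCompact (cube d) := by
  have h : cube d = (EuclideanSpace.equiv (Fin d) ℝ).toHomeomorph ⁻¹'
      (Set.univ.pi fun _ => Set.Icc (0 : ℝ) 1) := by
    ext t
    simp only [cube, Set.mem_preimage, Set.mem_univ_pi, Set.mem_ofPred_eq]
    rfl
  rw [h, Homeomorph.isCompact_preimage]
  exact isCompact_univ_pi fun _ => isCompact_Icc

lemma measurableSet_cube (d : ℕ) : MeasurableSet (cube d) := (isCompact_cube d).measurableSet

instance (d : ℕ) : IsFiniteMeasure (μcube d) :=
  ⟨by rw [μcube, Measure.restrict_apply_univ]; exact (isCompact_cube d).measure_lt_top⟩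

/-- Lebesgue measure on the product `[0,1]^d × [0,1]^d`. -/
noncomputable def μ2 (d : ℕ) : Measure (KDom d) := (μcube d).prod (μcube d)

lemma μ2_eq (d : ℕ) : μ2 d = volume.restrict (cube d ×ˢ cube d) := by
  rw [μ2, μcube, Measure.prod_restrict]; rfl

instance (d : ℕ) : IsFiniteMeasure (μ2 d) := by unfold μ2; infer_instance

lemma ae_μ2_mem (d : ℕ) : ∀ᵐ p ∂(μ2 d), p ∈ cube d ×ˢ cube d := by
  rw [μ2_eq]
  exact ae_restrict_mem ((measurableSet_cube d).prod (measurableSet_cube d))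

/-- The `W^{k,1}`-norm on `[0,1]^d × [0,1]^d` with values in `[0, ∞]`; it agrees with `sobNorm` on
`C^k` functions, see `SN_eq_sobNorm`. -/
noncomputable def SN {d : ℕ} (k : ℕ) (f : KDom d → ℂ) : ENNReal :=
  ∑ j ∈ Finset.range (k + 1), ∫⁻ p, ‖iteratedFDeriv ℝ j f p‖ₑ ∂(μ2 d)

lemma SN_mono {d k l : ℕ} (h : k ≤ l) (f : KDom d → ℂ) : SN k f ≤ SN l f :=
  Finset.sum_le_sum_of_subset (Finset.range_mono (by omega))

lemma lintegral_le_SN {d k j : ℕ} (h : j ≤ k) (f : KDom d → ℂ) :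
    ∫⁻ p, ‖iteratedFDeriv ℝ j f p‖ₑ ∂(μ2 d) ≤ SN k f :=
  Finset.single_le_sum (f := fun j => ∫⁻ p, ‖iteratedFDeriv ℝ j f p‖ₑ ∂(μ2 d))
    (fun _ _ => zero_le) (Finset.mem_range.2 (by omega))

lemma SN_eq_sobNorm {d k : ℕ} {f : KDom d → ℂ} (hf : ContDiff ℝ (k : WithTop ℕ∞) f) :
    SN k f = ENNReal.ofReal (sobNorm d k f) := by
  unfold SN sobNorm
  rw [ENNReal.ofReal_sum_of_nonneg (fun _ _ => integral_nonneg fun _ => norm_nonneg _)]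
  refine Finset.sum_congr rfl fun j hj => ?_
  rw [ofReal_integral_norm_eq_lintegral_enorm, μ2_eq]
  have hj' : j ≤ k := by simpa [Nat.lt_succ_iff] using hj
  exact (hf.continuous_iteratedFDeriv (by exact_mod_cast hj')).continuousOn.integrableOn_compact
    ((isCompact_cube d).prod (isCompact_cube d))

lemma norm_dirv {d : ℕ} (i : Fin d) : ‖dirv i‖ = 1 := by
  simp [dirv, Prod.norm_def]

/-- A directional derivative costs one order of differentiation and no constant. -/
lemma norm_iteratedFDeriv_dir_le {d : ℕ} {v : KDom d} (hv : ‖v‖ ≤ 1) {f : KDom d → ℂ} {k : ℕ}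
    (hf : ContDiff ℝ ((k + 1 : ℕ) : WithTop ℕ∞) f) {j : ℕ} (hj : j ≤ k) (p : KDom d) :
    ‖iteratedFDeriv ℝ j (fun p => fderiv ℝ f p v) p‖ ≤ ‖iteratedFDeriv ℝ (j + 1) f p‖ := by
  have h1 : ContDiff ℝ (k : WithTop ℕ∞) (fderiv ℝ f) :=
    hf.fderiv_right (by push_cast; exact le_rfl)
  have h2 := (ContinuousLinearMap.apply ℝ ℂ v).norm_iteratedFDeriv_comp_left
    (h1.contDiffAt (x := p)) (n := j) (by exact_mod_cast hj)
  have h3 : ‖ContinuousLinearMap.apply ℝ ℂ v‖ ≤ 1 :=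
    ContinuousLinearMap.opNorm_le_bound _ zero_le_one fun L => by
      calc ‖L v‖ ≤ ‖L‖ * ‖v‖ := L.le_opNorm v
        _ ≤ ‖L‖ * 1 := by gcongr
        _ = 1 * ‖L‖ := mul_comm _ _
  rw [norm_iteratedFDeriv_fderiv] at h2
  calc _ ≤ _ := h2
    _ ≤ 1 * _ := by gcongr
    _ = _ := one_mul _

lemma SN_pd_le {d : ℕ} (i : Fin d) {f : KDom d → ℂ} {k : ℕ}
    (hf : ContDiff ℝ ((k + 1 : ℕ) : WithTop ℕ∞) f) : SN k (pd i f) ≤ SN (k + 1) f := by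
  unfold SN
  rw [Finset.sum_range_succ' _ (k + 1)]
  refine le_add_right (Finset.sum_le_sum fun j hj => lintegral_mono fun p => ?_)
  rw [← ofReal_norm, ← ofReal_norm]
  exact ENNReal.ofReal_le_ofReal (norm_iteratedFDeriv_dir_le (norm_dirv i).le hf
    (by simpa [Nat.lt_succ_iff] using hj) p)

lemma measurable_iteratedFDeriv {d k j : ℕ} {f : KDom d → ℂ}
    (hf : ContDiff ℝ (k : WithTop ℕ∞) f) (hj : j ≤ k) :
    Measurable fun p => ‖iteratedFDeriv ℝ j f p‖ₑ :=
  (hf.continuous_iteratedFDeriv (by exact_mod_cast hj)).enorm.measurable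

/-- Multiplication by a fixed smooth function is bounded on `W^{k,1}` of the cube: Leibniz rule. -/
lemma SN_mul_le {d : ℕ} (k : ℕ) {a : KDom d → ℂ} (ha : ContDiff ℝ (k : WithTop ℕ∞) a) :
    ∃ C : NNReal, ∀ f : KDom d → ℂ, ContDiff ℝ (k : WithTop ℕ∞) f →
      SN k (fun p => a p * f p) ≤ C * SN k f := by
  have hbd : ∀ j ∈ Finset.range (k + 1), ∃ A : NNReal, ∀ p ∈ cube d ×ˢ cube d,
      ‖iteratedFDeriv ℝ j a p‖ ≤ A := by
    intro j hj
    have hj' : j ≤ k := by simpa [Nat.lt_succ_iff] using hj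
    obtain ⟨A, hA⟩ := ((isCompact_cube d).prod (isCompact_cube d)).exists_bound_of_continuousOn
      (ha.continuous_iteratedFDeriv (m := j) (by exact_mod_cast hj')).continuousOn
    exact ⟨A.toNNReal, fun p hp => (hA p hp).trans (Real.le_coe_toNNReal A)⟩
  choose! A hA using hbd
  refine ⟨∑ n ∈ Finset.range (k + 1), ∑ i ∈ Finset.range (n + 1), n.choose i * A i, ?_⟩
  intro f hf
  push_cast
  rw [Finset.sum_mul]
  unfold SN
  refine Finset.sum_le_sum fun n hn => ?_
  have hn' : n ≤ k := by simpa [Nat.lt_succ_iff] using hn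
  rw [Finset.sum_mul]
  calc ∫⁻ p, ‖iteratedFDeriv ℝ n (fun p => a p * f p) p‖ₑ ∂(μ2 d)
      ≤ ∫⁻ p, ∑ i ∈ Finset.range (n + 1),
          (n.choose i * A i : ENNReal) * ‖iteratedFDeriv ℝ (n - i) f p‖ₑ ∂(μ2 d) := by
        refine lintegral_mono_ae ?_
        filter_upwards [ae_μ2_mem d] with p hp
        have h1 := norm_iteratedFDeriv_mul_le ha hf p (n := n) (by exact_mod_cast hn')
        have h2 : ‖iteratedFDeriv ℝ n (fun p => a p * f p) p‖ ≤
            ∑ i ∈ Finset.range (n + 1), (n.choose i * A i : ℝ) *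
              ‖iteratedFDeriv ℝ (n - i) f p‖ := by
          refine h1.trans (Finset.sum_le_sum fun i hi => ?_)
          gcongr
          exact hA i (Finset.mem_range.2 (by have := Finset.mem_range.1 hi; omega)) p hp
        rw [← ofReal_norm]
        refine (ENNReal.ofReal_le_ofReal h2).trans (le_of_eq ?_)
        rw [ENNReal.ofReal_sum_of_nonneg (fun _ _ => by positivity)]
        refine Finset.sum_congr rfl fun i _ => ?_
        rw [ENNReal.ofReal_mul (by positivity), ENNReal.ofReal_mul (by positivity), ofReal_norm,
          ENNReal.ofReal_natCast, ENNReal.ofReal_coe_nnreal]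
    _ = ∑ i ∈ Finset.range (n + 1), (n.choose i * A i : ENNReal) *
          ∫⁻ p, ‖iteratedFDeriv ℝ (n - i) f p‖ₑ ∂(μ2 d) := by
        rw [lintegral_finsetSum _ fun i _ =>
          (measurable_iteratedFDeriv hf (by omega)).const_mul _]
        refine Finset.sum_congr rfl fun i _ => ?_
        rw [lintegral_const_mul _ (measurable_iteratedFDeriv hf (by omega))]
    _ ≤ _ := by
        refine Finset.sum_le_sum fun i hi => ?_
        gcongr
        exact lintegral_le_SN (by omega) f

lemma SN_neg {d : ℕ} (k : ℕ) (f : KDom d → ℂ) : SN k (fun p => -f p) = SN k f := by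
  unfold SN
  refine Finset.sum_congr rfl fun j _ => lintegral_congr fun p => ?_
  rw [show (fun p => -f p) = -f from rfl, iteratedFDeriv_neg_apply, enorm_neg]

lemma SN_sum_le {d : ℕ} (k : ℕ) {ι : Type*} (s : Finset ι) (f : ι → KDom d → ℂ)
    (hf : ∀ i ∈ s, ContDiff ℝ (k : WithTop ℕ∞) (f i)) :
    SN k (fun p => ∑ i ∈ s, f i p) ≤ ∑ i ∈ s, SN k (f i) := by
  unfold SN
  rw [Finset.sum_comm]
  refine Finset.sum_le_sum fun j hj => ?_
  have hj' : j ≤ k := by simpa [Nat.lt_succ_iff] using hj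
  rw [← lintegral_finsetSum' _ fun i hi => (measurable_iteratedFDeriv (hf i hi) hj').aemeasurable]
  refine lintegral_mono fun p => ?_
  rw [iteratedFDeriv_sum (fun i hi => (hf i hi).of_le (by exact_mod_cast hj'))]
  rw [Finset.sum_apply]
  exact enorm_sum_le s fun i => iteratedFDeriv ℝ j (f i) p

lemma SN_lap_le (d k : ℕ) : ∃ C : NNReal, ∀ f : KDom d → ℂ,
    ContDiff ℝ ((k + 2 : ℕ) : WithTop ℕ∞) f → SN k (lap f) ≤ C * SN (k + 2) f := by
  choose C hC using fun i : Fin d => SN_mul_le (k + 1) (contDiff_wt i)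
  refine ⟨∑ i, C i, fun f hf => ?_⟩
  push_cast
  rw [Finset.sum_mul]
  refine (SN_sum_le k Finset.univ (fun i => leg i f) fun i _ => contDiff_leg i hf).trans
    (Finset.sum_le_sum fun i _ => ?_)
  have hpd := contDiff_pd i hf
  unfold leg
  rw [SN_neg]
  calc _ ≤ _ := SN_pd_le i ((contDiff_wt i).mul hpd)
    _ ≤ _ := hC i _ hpd
    _ ≤ _ := by gcongr; exact SN_pd_le i hf

lemma SN_lap_iterate_le (d j : ℕ) : ∀ k : ℕ, ∃ C : NNReal, ∀ f : KDom d → ℂ,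
    ContDiff ℝ ((k + 2 * j : ℕ) : WithTop ℕ∞) f →
      ContDiff ℝ (k : WithTop ℕ∞) (lap^[j] f) ∧ SN k (lap^[j] f) ≤ C * SN (k + 2 * j) f := by
  induction j with
  | zero => exact fun k => ⟨1, fun f hf => ⟨by simpa using hf, by simp⟩⟩
  | succ j ih =>
    intro k
    obtain ⟨C, hC⟩ := ih k
    obtain ⟨C', hC'⟩ := SN_lap_le d (k + 2 * j)
    refine ⟨C * C', fun f hf => ?_⟩
    have hf2 : ContDiff ℝ ((k + 2 * j + 2 : ℕ) : WithTop ℕ∞) f := hf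
    obtain ⟨h1, h2⟩ := hC _ (contDiff_lap hf2)
    rw [Function.iterate_succ_apply]
    refine ⟨h1, h2.trans ?_⟩
    push_cast
    rw [mul_assoc]
    gcongr
    exact hC' f hf2

/-! ### The `L²`-norm is bounded by the `W^{d,1}`-norm -/

open scoped ENNReal

/-- The embedding `W^{1,1} ⊆ L^∞` on `[0, 1]`: average `h t = h τ + ∫ h'` over `τ`. -/
lemma enorm_le_lintegral_one_dim {h h' : ℝ → ℂ} (hh : ∀ t, HasDerivAt h (h' t) t)
    (hc : Continuous h') {t : ℝ} (ht : t ∈ Set.Icc (0 : ℝ) 1) :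
    ‖h t‖ₑ ≤ ∫⁻ τ in Set.Icc (0 : ℝ) 1, (‖h τ‖ₑ + ‖h' τ‖ₑ) := by
  have hcont : Continuous h := continuous_iff_continuousAt.2 fun t => (hh t).continuousAt
  have key : ∀ τ ∈ Set.Icc (0 : ℝ) 1,
      ‖h t‖ₑ ≤ ‖h τ‖ₑ + ∫⁻ σ in Set.Icc (0 : ℝ) 1, ‖h' σ‖ₑ := by
    intro τ hτ
    have h1 : ∫ σ in τ..t, h' σ = h t - h τ :=
      intervalIntegral.integral_eq_sub_of_hasDerivAt (fun x _ => hh x) (hc.intervalIntegrable _ _)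
    have h2 : h t = h τ + ∫ σ in τ..t, h' σ := by rw [h1]; ring
    calc ‖h t‖ₑ = ‖h τ + ∫ σ in τ..t, h' σ‖ₑ := by rw [← h2]
      _ ≤ ‖h τ‖ₑ + ‖∫ σ in τ..t, h' σ‖ₑ := enorm_add_le _ _
      _ ≤ _ := by
        gcongr
        have h3 : ‖∫ σ in τ..t, h' σ‖ₑ = ‖∫ σ in Set.uIoc τ t, h' σ‖ₑ := by
          rw [← ofReal_norm, ← ofReal_norm, intervalIntegral.norm_intervalIntegral_eq]
        rw [h3]
        refine (enorm_integral_le_lintegral_enorm _).trans (lintegral_mono_set ?_)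
        refine Set.uIoc_subset_uIcc.trans ?_
        exact Set.uIcc_subset_Icc hτ ht
  calc ‖h t‖ₑ = ∫⁻ τ in Set.Icc (0 : ℝ) 1, ‖h t‖ₑ := by simp
    _ ≤ ∫⁻ τ in Set.Icc (0 : ℝ) 1, (‖h τ‖ₑ + ∫⁻ σ in Set.Icc (0 : ℝ) 1, ‖h' σ‖ₑ) :=
        setLIntegral_mono' measurableSet_Icc key
    _ = _ := by
        rw [lintegral_add_left hcont.enorm.measurable, lintegral_add_left hcont.enorm.measurable]
        simp

/-- The one-dimensional embedding iterated over the coordinates in `s`, along an affine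
parametrization `φ` with directions `v i`. The integrals run over the coordinates in `s` only, each
over `[0, 1]`, and each coordinate costs one derivative and a factor `2`. -/
lemma enorm_le_lmarginal {d : ℕ} {φ : (Fin d → ℝ) → KDom d} {v : Fin d → KDom d}
    (hv : ∀ i, ‖v i‖ ≤ 1) (hφc : Continuous φ)
    (hφ : ∀ x i τ, φ (Function.update x i τ) = φ x + (τ - x i) • v i) (s : Finset (Fin d)) :
    ∀ f : KDom d → ℂ, ContDiff ℝ (s.card : WithTop ℕ∞) f →
      ∀ x : Fin d → ℝ, (∀ i, x i ∈ Set.Icc (0 : ℝ) 1) →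
      ‖f (φ x)‖ₑ ≤ 2 ^ s.card * (∫⋯∫⁻_s, (fun y => ∑ j ∈ Finset.range (s.card + 1),
        ‖iteratedFDeriv ℝ j f (φ y)‖ₑ) ∂(fun _ => volume.restrict (Set.Icc (0 : ℝ) 1))) x := by
  classical
  induction s using Finset.induction_on with
  | empty =>
    intro f hf x hx
    simp only [Finset.card_empty, pow_zero, one_mul, lmarginal_empty, zero_add,
      Finset.sum_range_one]
    rw [← ofReal_norm, ← ofReal_norm, norm_iteratedFDeriv_zero]
  | insert i s his ih =>
    intro f hf x hx
    rw [Finset.card_insert_of_notMem his] at hf ⊢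
    set g : KDom d → ℂ := fun p => fderiv ℝ f p (v i) with hg
    have hgC : ContDiff ℝ (s.card : WithTop ℕ∞) g :=
      (hf.fderiv_right (m := (s.card : WithTop ℕ∞)) (by push_cast; exact le_rfl)).clm_apply
        contDiff_const
    have hfC : ContDiff ℝ (s.card : WithTop ℕ∞) f := hf.of_le (by exact_mod_cast Nat.le_succ _)
    set S : (Fin d → ℝ) → ℝ≥0∞ := fun y => ∑ j ∈ Finset.range (s.card + 1 + 1),
      ‖iteratedFDeriv ℝ j f (φ y)‖ₑ with hS
    have hSm : Measurable S := Finset.measurable_fun_sum _ fun j hj => by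
      have : j ≤ s.card + 1 := by simpa [Nat.lt_succ_iff] using hj
      exact ((measurable_iteratedFDeriv hf this).comp hφc.measurable)
    have hline : ∀ τ, HasDerivAt (fun τ => f (φ (Function.update x i τ)))
        (g (φ (Function.update x i τ))) τ := by
      intro τ
      have h1 : HasDerivAt (fun τ : ℝ => φ x + (τ - x i) • v i) (v i) τ := by
        simpa using (((hasDerivAt_id τ).sub_const (x i)).smul_const (v i)).const_add (φ x)
      simp only [hφ]
      have h2 : DifferentiableAt ℝ f (φ x + (τ - x i) • v i) :=
        (hf.differentiable (by simp)).differentiableAt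
      exact h2.hasFDerivAt.comp_hasDerivAt τ h1
    have hgc : Continuous fun τ => g (φ (Function.update x i τ)) :=
      hgC.continuous.comp (hφc.comp (continuous_const.update i continuous_id))
    have h1 := enorm_le_lintegral_one_dim hline hgc (hx i)
    rw [Function.update_eq_self] at h1
    refine h1.trans ?_
    rw [lmarginal_insert _ hSm his, ← lintegral_const_mul' _ _ (by simp)]
    refine setLIntegral_mono' measurableSet_Icc fun τ hτ => ?_
    have hx' : ∀ k, Function.update x i τ k ∈ Set.Icc (0 : ℝ) 1 := by
      intro k
      by_cases hk : k = i
      · subst hk; simpa using hτ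
      · simpa [hk] using hx k
    have hf1 := ih f hfC _ hx'
    have hg1 := ih g hgC _ hx'
    have hf2 : (∫⋯∫⁻_s, (fun y => ∑ j ∈ Finset.range (s.card + 1),
        ‖iteratedFDeriv ℝ j f (φ y)‖ₑ) ∂(fun _ => volume.restrict (Set.Icc (0 : ℝ) 1)))
          (Function.update x i τ) ≤
        (∫⋯∫⁻_s, S ∂(fun _ => volume.restrict (Set.Icc (0 : ℝ) 1))) (Function.update x i τ) := by
      refine lmarginal_mono (fun y => ?_) _
      exact Finset.sum_le_sum_of_subset (Finset.range_mono (by omega))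
    have hg2 : (∫⋯∫⁻_s, (fun y => ∑ j ∈ Finset.range (s.card + 1),
        ‖iteratedFDeriv ℝ j g (φ y)‖ₑ) ∂(fun _ => volume.restrict (Set.Icc (0 : ℝ) 1)))
          (Function.update x i τ) ≤
        (∫⋯∫⁻_s, S ∂(fun _ => volume.restrict (Set.Icc (0 : ℝ) 1))) (Function.update x i τ) := by
      refine lmarginal_mono (fun y => ?_) _
      simp only [hS]
      rw [Finset.sum_range_succ' _ (s.card + 1)]
      refine le_add_right (Finset.sum_le_sum fun j hj => ?_)
      rw [← ofReal_norm, ← ofReal_norm]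
      exact ENNReal.ofReal_le_ofReal (norm_iteratedFDeriv_dir_le (hv i) hf
        (by simpa [Nat.lt_succ_iff] using hj) _)
    calc _ ≤ _ := add_le_add (hf1.trans (mul_le_mul' le_rfl hf2))
          (hg1.trans (mul_le_mul' le_rfl hg2))
      _ = _ := by rw [← two_mul, pow_succ]; ring

lemma measurePreserving_toLp_cube (d : ℕ) :
    MeasurePreserving (WithLp.toLp 2 : (Fin d → ℝ) → EuclideanSpace ℝ (Fin d))
      (Measure.pi fun _ => volume.restrict (Set.Icc (0 : ℝ) 1)) (μcube d) := by
  have h := (PiLp.volume_preserving_toLp (Fin d)).restrict_preimage (measurableSet_cube d)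
  convert h using 1
  · rw [← Measure.restrict_pi_pi, volume_pi]
    congr 1
    ext x
    simp [cube, Pi.le_def, forall_and]
  · rfl

/-- The sum of the norms at `p` of the derivatives of `f` of order at most `d`. -/
noncomputable def jetSum {d : ℕ} (f : KDom d → ℂ) (p : KDom d) : ℝ≥0∞ :=
  ∑ j ∈ Finset.range (d + 1), ‖iteratedFDeriv ℝ j f p‖ₑ

lemma measurable_jetSum {d : ℕ} {f : KDom d → ℂ} (hf : ContDiff ℝ (d : WithTop ℕ∞) f) :
    Measurable (jetSum f) :=
  Finset.measurable_fun_sum _ fun j hj =>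
    measurable_iteratedFDeriv hf (by simpa [Nat.lt_succ_iff] using hj)

lemma lintegral_jetSum {d : ℕ} {f : KDom d → ℂ} (hf : ContDiff ℝ (d : WithTop ℕ∞) f) :
    ∫⁻ p, jetSum f p ∂(μ2 d) = SN d f := by
  unfold jetSum SN
  exact lintegral_finsetSum' _ fun j hj =>
    (measurable_iteratedFDeriv hf (by simpa [Nat.lt_succ_iff] using hj)).aemeasurable

lemma toLp_update {d : ℕ} (x : Fin d → ℝ) (i : Fin d) (τ : ℝ) :
    (WithLp.toLp 2 (Function.update x i τ) : EuclideanSpace ℝ (Fin d)) =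
      WithLp.toLp 2 x + (τ - x i) • EuclideanSpace.single i 1 := by
  ext k
  by_cases hk : k = i
  · subst hk; simp
  · simp [hk]

lemma enorm_le_lintegral_fst {d : ℕ} {f : KDom d → ℂ} (hf : ContDiff ℝ (d : WithTop ℕ∞) f)
    (t s : EuclideanSpace ℝ (Fin d)) (ht : t ∈ cube d) :
    ‖f (t, s)‖ₑ ≤ 2 ^ d * ∫⁻ t', jetSum f (t', s) ∂(μcube d) := by
  have h := enorm_le_lmarginal (φ := fun x => ((WithLp.toLp 2 x, s) : KDom d))
    (v := fun i => (EuclideanSpace.single i 1, 0)) (fun i => (norm_dirv i).le)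
    (by fun_prop) (fun x i τ => by simp [toLp_update]) Finset.univ f (by simpa using hf)
    (fun i => t i) ht
  rw [lmarginal_univ] at h
  simp only [Finset.card_univ, Fintype.card_fin] at h
  rw [← (measurePreserving_toLp_cube d).lintegral_comp
    (f := fun t' => jetSum f (t', s)) ((measurable_jetSum hf).comp measurable_prodMk_right)]
  exact h

lemma enorm_le_lintegral_snd {d : ℕ} {f : KDom d → ℂ} (hf : ContDiff ℝ (d : WithTop ℕ∞) f)
    (t s : EuclideanSpace ℝ (Fin d)) (hs : s ∈ cube d) :
    ‖f (t, s)‖ₑ ≤ 2 ^ d * ∫⁻ s', jetSum f (t, s') ∂(μcube d) := by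
  have h := enorm_le_lmarginal (φ := fun x => ((t, WithLp.toLp 2 x) : KDom d))
    (v := fun i => (0, EuclideanSpace.single i 1)) (fun i => by simp [Prod.norm_def])
    (by fun_prop) (fun x i τ => by simp [toLp_update]) Finset.univ f (by simpa using hf)
    (fun i => s i) hs
  rw [lmarginal_univ] at h
  simp only [Finset.card_univ, Fintype.card_fin] at h
  rw [← (measurePreserving_toLp_cube d).lintegral_comp
    (f := fun s' => jetSum f (t, s')) ((measurable_jetSum hf).comp measurable_prodMk_left)]
  exact h

/-- The embedding `W^{d,1} ⊆ L²` on the `2 d`-dimensional cube: one factor `|f (t, s)|` is bounded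
by a function of `t`, the other by a function of `s`, and the integral of the product splits. -/
lemma lintegral_sq_le {d : ℕ} {f : KDom d → ℂ} (hf : ContDiff ℝ (d : WithTop ℕ∞) f) :
    ∫⁻ p, ‖f p‖ₑ ^ 2 ∂(μ2 d) ≤ (2 ^ d * SN d f) ^ 2 := by
  have hm := measurable_jetSum hf
  calc ∫⁻ p, ‖f p‖ₑ ^ 2 ∂(μ2 d)
      ≤ ∫⁻ p : KDom d, (2 ^ d * ∫⁻ s', jetSum f (p.1, s') ∂(μcube d)) *
          (2 ^ d * ∫⁻ t', jetSum f (t', p.2) ∂(μcube d)) ∂(μ2 d) := by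
        refine lintegral_mono_ae ?_
        filter_upwards [ae_μ2_mem d] with p hp
        rw [pow_two]
        exact mul_le_mul' (enorm_le_lintegral_snd hf p.1 p.2 hp.2)
          (enorm_le_lintegral_fst hf p.1 p.2 hp.1)
    _ = (2 ^ d * ∫⁻ p, jetSum f p ∂(μ2 d)) * (2 ^ d * ∫⁻ p, jetSum f p ∂(μ2 d)) := by
        unfold μ2
        have h1 : Measurable fun t => ∫⁻ s', jetSum f (t, s') ∂(μcube d) :=
          hm.lintegral_prod_right'
        have h2 : Measurable fun s => ∫⁻ t', jetSum f (t', s) ∂(μcube d) :=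
          hm.lintegral_prod_left'
        rw [lintegral_prod_mul (f := fun t => 2 ^ d * ∫⁻ s', jetSum f (t, s') ∂(μcube d))
          (g := fun s => 2 ^ d * ∫⁻ t', jetSum f (t', s) ∂(μcube d))
          (h1.const_mul _).aemeasurable (h2.const_mul _).aemeasurable,
          lintegral_const_mul _ h1, lintegral_const_mul _ h2,
          ← lintegral_prod _ hm.aemeasurable, ← lintegral_prod_symm _ hm.aemeasurable]
    _ = _ := by rw [lintegral_jetSum hf, pow_two]

/-! ### Symmetry of the Legendre operator -/

/-- Divergence theorem on the cube for `F e_i` with `F = 0` on the two faces `t_i ∈ {0, 1}`. -/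
lemma integral_pd_eq_zero {d : ℕ} (i : Fin d) {F : KDom d → ℂ} (hF : ContDiff ℝ 1 F)
    (s : EuclideanSpace ℝ (Fin d))
    (h0 : ∀ t : EuclideanSpace ℝ (Fin d), t i = 0 ∨ t i = 1 → F (t, s) = 0) :
    ∫ t, pd i F (t, s) ∂(μcube d) = 0 := by
  obtain ⟨n, rfl⟩ : ∃ n, d = n + 1 := ⟨d - 1, by have := i.isLt; omega⟩
  rw [← (measurePreserving_toLp_cube (n + 1)).integral_comp
    (MeasurableEquiv.toLp 2 (Fin (n + 1) → ℝ)).measurableEmbedding,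
    ← Measure.restrict_pi_pi, ← volume_pi, Set.pi_univ_Icc]
  let J : (Fin (n + 1) → ℝ) →L[ℝ] KDom (n + 1) :=
    (ContinuousLinearMap.inl ℝ _ _).comp (PiLp.continuousLinearEquiv 2 ℝ _).symm.toContinuousLinearMap
  have hJ : ∀ x, ((WithLp.toLp 2 x, s) : KDom (n + 1)) = J x + (0, s) := by
    intro x; simp [J]
  have hder : ∀ x, HasFDerivAt (fun x => F (WithLp.toLp 2 x, s))
      ((fderiv ℝ F (WithLp.toLp 2 x, s)).comp J) x := by
    intro x
    have h1 : HasFDerivAt (fun x => ((WithLp.toLp 2 x, s) : KDom (n + 1))) J x := by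
      rw [show (fun x => ((WithLp.toLp 2 x, s) : KDom (n + 1))) = fun x => J x + (0, s) from
        funext hJ]
      exact J.hasFDerivAt.add_const _
    exact ((hF.differentiable one_ne_zero).differentiableAt.hasFDerivAt).comp x h1
  -- the vector field `F e_i`
  let G : (Fin (n + 1) → ℝ) → Fin (n + 1) → ℂ :=
    fun x => Pi.single i (F (WithLp.toLp 2 x, s))
  let G' : (Fin (n + 1) → ℝ) → (Fin (n + 1) → ℝ) →L[ℝ] Fin (n + 1) → ℂ :=
    fun x => (ContinuousLinearMap.single ℝ (fun _ => ℂ) i).comp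
      ((fderiv ℝ F (WithLp.toLp 2 x, s)).comp J)
  have hG : ∀ x, HasFDerivAt G (G' x) x := fun x =>
    (ContinuousLinearMap.single ℝ (fun _ : Fin (n + 1) => ℂ) i).hasFDerivAt.comp x (hder x)
  have hsum : ∀ x, ∑ j, (G' x) (Pi.single j 1) j = pd i F (WithLp.toLp 2 x, s) := by
    intro x
    rw [Finset.sum_eq_single i]
    · simp [G', J, pd, dirv]
    · intro j _ hj
      simp [G', hj]
    · simp
  have hcont : Continuous fun x : Fin (n + 1) → ℝ => pd i F (WithLp.toLp 2 x, s) :=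
    (contDiff_pd (k := 0) i (by simpa using hF)).continuous.comp (by fun_prop)
  have key := integral_divergence_of_hasFDerivAt_off_countable (fun _ => (0 : ℝ)) (fun _ => 1)
    (fun _ => zero_le_one) G G' ∅ Set.countable_empty
    (continuous_iff_continuousAt.2 fun x => (hG x).continuousAt).continuousOn
    (fun x _ => hG x)
    (by simp only [hsum]; exact hcont.continuousOn.integrableOn_compact isCompact_Icc)
  simp only [hsum] at key
  rw [key]
  refine Finset.sum_eq_zero fun j _ => ?_
  by_cases hj : j = i
  · subst hj
    simp only [G, Pi.single_eq_same]
    simp [h0]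
  · simp [G, hj]

lemma integrable_slice {d : ℕ} {f : KDom d → ℂ} (hf : Continuous f)
    (s : EuclideanSpace ℝ (Fin d)) : Integrable (fun t => f (t, s)) (μcube d) :=
  ((hf.comp (Continuous.prodMk_left s)).continuousOn).integrableOn_compact (isCompact_cube d)

lemma pd_mul {d : ℕ} (i : Fin d) {f g : KDom d → ℂ} (hf : Differentiable ℝ f)
    (hg : Differentiable ℝ g) (p : KDom d) :
    pd i (fun q => f q * g q) p = f p * pd i g p + pd i f p * g p := by
  unfold pd
  rw [fderiv_fun_mul (hf p) (hg p)]
  simp only [_root_.add_apply, _root_.smul_apply, smul_eq_mul]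
  ring

/-- Symmetry of the one-coordinate operator, by integrating
`∂_i (t_i (1 - t_i) (f ∂_i g - g ∂_i f))`. -/
lemma integral_leg_mul {d : ℕ} (i : Fin d) {f g : KDom d → ℂ} (hf : ContDiff ℝ (2 : ℕ) f)
    (hg : ContDiff ℝ (2 : ℕ) g) (s : EuclideanSpace ℝ (Fin d)) :
    ∫ t, leg i f (t, s) * g (t, s) ∂(μcube d) = ∫ t, f (t, s) * leg i g (t, s) ∂(μcube d) := by
  have hf1 : ContDiff ℝ (1 : ℕ) f := hf.of_le (by norm_num)
  have hg1 : ContDiff ℝ (1 : ℕ) g := hg.of_le (by norm_num)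
  have hpf : ContDiff ℝ (1 : ℕ) (fun q => wt i q * pd i f q) :=
    (contDiff_wt i).mul (contDiff_pd i hf)
  have hpg : ContDiff ℝ (1 : ℕ) (fun q => wt i q * pd i g q) :=
    (contDiff_wt i).mul (contDiff_pd i hg)
  have dif : ∀ {h : KDom d → ℂ}, ContDiff ℝ (1 : ℕ) h → Differentiable ℝ h :=
    fun h => h.differentiable (by simp)
  -- the weighted Wronskian, which vanishes on the faces `t_i ∈ {0, 1}`
  set F : KDom d → ℂ := fun q => f q * (wt i q * pd i g q) - (wt i q * pd i f q) * g q with hF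
  have hFC : ContDiff ℝ (1 : ℕ) F := (hf1.mul hpg).sub (hpf.mul hg1)
  have hpdF : ∀ p, pd i F p = leg i f p * g p - f p * leg i g p := by
    intro p
    have h1 : pd i F p = pd i (fun q => f q * (wt i q * pd i g q)) p -
        pd i (fun q => (wt i q * pd i f q) * g q) p := by
      unfold pd
      rw [hF, fderiv_fun_sub (dif (hf1.mul hpg) p) (dif (hpf.mul hg1) p)]
      rfl
    rw [h1, pd_mul i (dif hf1) (dif hpg), pd_mul i (dif hpf) (dif hg1)]
    unfold leg
    ring
  have h0 : ∀ t : EuclideanSpace ℝ (Fin d), t i = 0 ∨ t i = 1 → F (t, s) = 0 := by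
    intro t ht
    have : wt i (t, s) = 0 := by rcases ht with h | h <;> simp [wt, h]
    simp [hF, this]
  have := integral_pd_eq_zero i (by simpa using hFC) s h0
  simp only [hpdF] at this
  rw [integral_sub] at this
  · exact sub_eq_zero.1 this
  · exact integrable_slice ((contDiff_leg (k := 0) i hf).continuous.mul hg.continuous) s
  · exact integrable_slice (hf.continuous.mul (contDiff_leg (k := 0) i hg).continuous) s

/-- The eigenvalue `∑ i, α_i (α_i + 1)` of the Legendre operator on `prodLeg α`. -/
noncomputable def eig {d : ℕ} (α : Fin d → ℕ) : ℂ := ∑ i, ((α i * (α i + 1) : ℕ) : ℂ)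

lemma contDiff_prodLeg {d : ℕ} (α : Fin d → ℕ) {n : WithTop ℕ∞} : ContDiff ℝ n (prodLeg α) :=
  contDiff_pf _

lemma integral_leg_mul_prodLeg {d : ℕ} (i : Fin d) {f : KDom d → ℂ} (hf : ContDiff ℝ (2 : ℕ) f)
    (α : Fin d → ℕ) (s : EuclideanSpace ℝ (Fin d)) :
    ∫ t, leg i f (t, s) * prodLeg α (t, s) ∂(μcube d) =
      ((α i * (α i + 1) : ℕ) : ℂ) * ∫ t, f (t, s) * prodLeg α (t, s) ∂(μcube d) := by
  rw [integral_leg_mul i hf (contDiff_prodLeg α), ← integral_const_mul]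
  refine integral_congr_ae (.of_forall fun t => ?_)
  simp only [leg_prodLeg]
  ring

lemma integral_lap_mul_prodLeg {d : ℕ} {f : KDom d → ℂ} (hf : ContDiff ℝ (2 : ℕ) f)
    (α : Fin d → ℕ) (s : EuclideanSpace ℝ (Fin d)) :
    ∫ t, lap f (t, s) * prodLeg α (t, s) ∂(μcube d) =
      eig α * ∫ t, f (t, s) * prodLeg α (t, s) ∂(μcube d) := by
  unfold lap eig
  simp only [Finset.sum_mul]
  rw [integral_finsetSum]
  · exact Finset.sum_congr rfl fun i _ => integral_leg_mul_prodLeg i hf α s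
  · intro i _
    exact integrable_slice ((contDiff_leg (k := 0) i hf).continuous.mul
      (contDiff_prodLeg α (n := 0)).continuous) s

lemma integral_lap_iterate_mul_prodLeg {d : ℕ} (j : ℕ) (α : Fin d → ℕ)
    (s : EuclideanSpace ℝ (Fin d)) : ∀ f : KDom d → ℂ, ContDiff ℝ ((2 * j : ℕ) : WithTop ℕ∞) f →
    ∫ t, (lap^[j] f) (t, s) * prodLeg α (t, s) ∂(μcube d) =
      eig α ^ j * ∫ t, f (t, s) * prodLeg α (t, s) ∂(μcube d) := by
  induction j with
  | zero => intro f _; simp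
  | succ j ih =>
    intro f hf
    have hf' : ContDiff ℝ ((2 * j + 2 : ℕ) : WithTop ℕ∞) f := hf
    rw [Function.iterate_succ_apply, ih _ (contDiff_lap hf'),
      integral_lap_mul_prodLeg (hf.of_le (by exact_mod_cast (by omega : 2 ≤ 2 * (j + 1)))), pow_succ,
      mul_assoc]

/-- Orthogonality: already in one coordinate where `α` and `β` differ, the two products are
eigenfunctions of a symmetric operator with distinct eigenvalues. -/
lemma integral_prodLeg_mul_prodLeg {d : ℕ} {α β : Fin d → ℕ} (h : α ≠ β)
    (s : EuclideanSpace ℝ (Fin d)) :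
    ∫ t, prodLeg α (t, s) * prodLeg β (t, s) ∂(μcube d) = 0 := by
  obtain ⟨i, hi⟩ := Function.ne_iff.1 h
  have h1 := integral_leg_mul_prodLeg i (contDiff_prodLeg α) β s
  simp only [leg_prodLeg, mul_assoc] at h1
  rw [integral_const_mul, ← sub_eq_zero, ← sub_mul] at h1
  refine (mul_eq_zero.1 h1).resolve_left ?_
  intro h2
  rw [sub_eq_zero] at h2
  have h3 : α i * (α i + 1) = β i * (β i + 1) := by exact_mod_cast h2
  rcases lt_or_gt_of_ne hi with h4 | h4 <;> nlinarith

/-! ### The Legendre basis of `L²` -/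

lemma memLp_of_continuous {d : ℕ} {f : EuclideanSpace ℝ (Fin d) → ℂ} (hf : Continuous f) :
    MemLp f 2 (μcube d) := by
  obtain ⟨C, hC⟩ := (isCompact_cube d).exists_bound_of_continuousOn hf.continuousOn
  refine MemLp.of_bound hf.aestronglyMeasurable C ?_
  filter_upwards [ae_restrict_mem (measurableSet_cube d)] with t ht using hC t ht

/-- The product `∏ j, P_{α_j} (t_j)` of shifted Legendre polynomials as a function on `ℝ^d`; the
second argument of `prodLeg` is irrelevant and set to `0`. -/
noncomputable def legE {d : ℕ} (α : Fin d → ℕ) : EuclideanSpace ℝ (Fin d) → ℂ :=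
  fun t => prodLeg α (t, 0)

lemma continuous_legE {d : ℕ} (α : Fin d → ℕ) : Continuous (legE α) :=
  (contDiff_prodLeg α (n := 0)).continuous.comp (by fun_prop)

lemma legE_eq {d : ℕ} (α : Fin d → ℕ) (t s : EuclideanSpace ℝ (Fin d)) :
    prodLeg α (t, s) = legE α t := rfl

lemma conj_legE {d : ℕ} (α : Fin d → ℕ) (t : EuclideanSpace ℝ (Fin d)) :
    (starRingEnd ℂ) (legE α t) = legE α t := by
  unfold legE prodLeg pf
  rw [map_prod]
  refine Finset.prod_congr rfl fun j _ => ?_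
  have h : legendreC (α j) =
      ((Polynomial.shiftedLegendre (α j)).map (Int.castRingHom ℝ)).map Complex.ofRealHom := by
    rw [legendreC, Polynomial.map_map]
    congr 1
  change (starRingEnd ℂ) (Polynomial.eval _ (legendreC (α j))) =
    Polynomial.eval _ (legendreC (α j))
  rw [h, Polynomial.eval_map]
  have := Polynomial.eval₂_at_apply (p := (Polynomial.shiftedLegendre (α j)).map
    (Int.castRingHom ℝ)) Complex.ofRealHom (t j)
  rw [Complex.ofRealHom_eq_coe] at this
  rw [this, Complex.ofRealHom_eq_coe, Complex.conj_ofReal]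

/-- The class of `legE α` in `L²` of the cube; it is not normalized. -/
noncomputable def legLp {d : ℕ} (α : Fin d → ℕ) : Lp ℂ 2 (μcube d) :=
  (memLp_of_continuous (continuous_legE α)).toLp

lemma legLp_coe {d : ℕ} (α : Fin d → ℕ) : legLp α =ᵐ[μcube d] legE α := MemLp.coeFn_toLp _

lemma inner_legLp {d : ℕ} (α : Fin d → ℕ) (ξ : Lp ℂ 2 (μcube d)) :
    inner ℂ (legLp α) ξ = ∫ t, ξ t * legE α t ∂(μcube d) := by
  rw [L2.inner_def]
  refine integral_congr_ae ?_
  filter_upwards [legLp_coe α] with t ht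
  rw [ht, RCLike.inner_apply, conj_legE]

lemma inner_legLp_legLp {d : ℕ} {α β : Fin d → ℕ} (h : α ≠ β) :
    inner ℂ (legLp α) (legLp β) = 0 := by
  rw [inner_legLp, ← integral_prodLeg_mul_prodLeg (Ne.symm h) 0]
  refine integral_congr_ae ?_
  filter_upwards [legLp_coe β] with t ht
  rw [ht]; rfl

lemma cube_subset_closure_interior (d : ℕ) : cube d ⊆ closure (interior (cube d)) := by
  have hconv : Convex ℝ (cube d) := by
    intro x hx y hy a b ha hb hab i
    exact (convex_Icc (0 : ℝ) 1) (hx i) (hy i) ha hb hab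
  have hopen : IsOpen {t : EuclideanSpace ℝ (Fin d) | ∀ i, t i ∈ Set.Ioo (0 : ℝ) 1} := by
    have : {t : EuclideanSpace ℝ (Fin d) | ∀ i, t i ∈ Set.Ioo (0 : ℝ) 1} =
        ⋂ i, (fun t : EuclideanSpace ℝ (Fin d) => t i) ⁻¹' Set.Ioo (0 : ℝ) 1 := by
      ext t; simp
    rw [this]
    exact isOpen_iInter_of_finite fun i => isOpen_Ioo.preimage (by fun_prop)
  have hne : (interior (cube d)).Nonempty := by
    refine ⟨WithLp.toLp 2 fun _ => 1 / 2, ?_⟩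
    refine interior_maximal (t := {t : EuclideanSpace ℝ (Fin d) | ∀ i, t i ∈ Set.Ioo (0 : ℝ) 1})
      (fun t (ht : ∀ i, t i ∈ Set.Ioo (0 : ℝ) 1) i =>
        Set.Ioo_subset_Icc_self (ht i)) hopen ?_
    intro i
    norm_num
  rw [hconv.closure_interior_eq_closure_of_nonempty_interior hne]
  exact subset_closure

lemma legLp_ne_zero {d : ℕ} (α : Fin d → ℕ) : legLp α ≠ 0 := by
  intro h
  have h1 : legE α =ᵐ[μcube d] fun _ => 0 := by
    have h2 := legLp_coe α
    rw [h] at h2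
    exact h2.symm.trans (Lp.coeFn_zero _ _ _)
  have h2 := Measure.eqOn_of_ae_eq h1 (continuous_legE α).continuousOn continuousOn_const
    (cube_subset_closure_interior d)
  have h3 : legE α 0 = 0 := h2 (show (0 : EuclideanSpace ℝ (Fin d)) ∈ cube d from fun i => by simp)
  simp [legE, prodLeg, pf, legendreC_eval_zero] at h3

/-- The linear span of the products of Legendre polynomials, as functions on `ℝ^d` (these are all
the polynomial functions). -/
noncomputable def legSpan (d : ℕ) : Submodule ℂ (EuclideanSpace ℝ (Fin d) → ℂ) :=
  Submodule.span ℂ (Set.range legE)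

lemma pf_update {d : ℕ} (q : Fin d → Polynomial ℂ) (i : Fin d) (r : Polynomial ℂ) (p : KDom d) :
    pf (Function.update q i r) p = r.eval ((p.1 i : ℝ) : ℂ) *
      ∏ j ∈ Finset.univ.erase i, (q j).eval ((p.1 j : ℝ) : ℂ) := by
  unfold pf
  rw [← Finset.mul_prod_erase _ _ (Finset.mem_univ i), Function.update_self]
  congr 1
  refine Finset.prod_congr rfl fun j hj => ?_
  rw [Function.update_of_ne (Finset.ne_of_mem_erase hj)]

lemma pf_update_mem_legSpan {d : ℕ} (α : Fin d → ℕ) (i : Fin d) (r : Polynomial ℂ) :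
    (fun t => pf (Function.update (fun j => legendreC (α j)) i r) (t, 0)) ∈ legSpan d := by
  have hr : r ∈ Submodule.span ℂ (Set.range legendreC) := by rw [legendreC_span]; trivial
  induction hr using Submodule.span_induction with
  | mem r hr =>
    obtain ⟨n, rfl⟩ := hr
    refine Submodule.subset_span ⟨Function.update α i n, ?_⟩
    funext t
    unfold legE prodLeg
    congr 1
    funext j
    by_cases hj : j = i
    · subst hj; simp
    · simp [hj]
  | zero =>
    convert (legSpan d).zero_mem using 1
    funext t
    simp [pf_update]
  | add r r' _ _ h h' =>
    convert (legSpan d).add_mem h h' using 1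
    funext t
    simp only [pf_update, Pi.add_apply, Polynomial.eval_add]
    ring
  | smul c r _ h =>
    convert (legSpan d).smul_mem c h using 1
    funext t
    simp only [pf_update, Pi.smul_apply, Polynomial.eval_smul, smul_eq_mul]
    ring

lemma coord_mul_mem_legSpan {d : ℕ} (i : Fin d) {w : EuclideanSpace ℝ (Fin d) → ℂ}
    (hw : w ∈ legSpan d) : (fun t => ((t i : ℝ) : ℂ) * w t) ∈ legSpan d := by
  induction hw using Submodule.span_induction with
  | mem w hw =>
    obtain ⟨α, rfl⟩ := hw
    convert pf_update_mem_legSpan α i (Polynomial.X * legendreC (α i)) using 1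
    funext t
    rw [pf_update]
    unfold legE prodLeg pf
    rw [← Finset.mul_prod_erase _ _ (Finset.mem_univ i)]
    simp only [Polynomial.eval_mul, Polynomial.eval_X]
    ring
  | zero =>
    convert (legSpan d).zero_mem using 1
    funext t
    simp
  | add r r' _ _ h h' =>
    convert (legSpan d).add_mem h h' using 1
    funext t
    simp only [Pi.add_apply]
    ring
  | smul c r _ h =>
    convert (legSpan d).smul_mem c h using 1
    funext t
    simp only [Pi.smul_apply, smul_eq_mul]
    ring

/-- Stone–Weierstrass on the cube. The span `legSpan d` is not known beforehand to be an algebra;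
it is stable under multiplication by coordinates, hence by the algebra they generate, and contains
the constant `1`. -/
lemma exists_legSpan_approx {d : ℕ} {f : EuclideanSpace ℝ (Fin d) → ℂ} (hf : Continuous f)
    {ε : ℝ} (hε : 0 < ε) : ∃ w ∈ legSpan d, ∀ t ∈ cube d, ‖f t - w t‖ ≤ ε := by
  have : CompactSpace (cube d) := isCompact_iff_compactSpace.1 (isCompact_cube d)
  let X : Fin d → C(cube d, ℂ) := fun i => ⟨fun t => ((t.1 i : ℝ) : ℂ), by fun_prop⟩
  have hstar : star (Set.range X) = Set.range X := by
    have h : ∀ i, star (X i) = X i := fun i => by ext t; simp [X]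
    ext g
    simp only [Set.mem_star, Set.mem_range]
    constructor
    · rintro ⟨i, hi⟩; exact ⟨i, by rw [← h i, hi, star_star]⟩
    · rintro ⟨i, rfl⟩; exact ⟨i, (h i).symm⟩
  let A : StarSubalgebra ℂ C(cube d, ℂ) := StarAlgebra.adjoin ℂ (Set.range X)
  have hsep : A.SeparatesPoints := by
    intro x y hxy
    have : ∃ i, x.1 i ≠ y.1 i := by
      by_contra! hcon
      exact hxy (Subtype.ext (by ext i; exact hcon i))
    obtain ⟨i, hi⟩ := this
    refine ⟨X i, ⟨X i, StarAlgebra.subset_adjoin ℂ _ ⟨i, rfl⟩, rfl⟩, ?_⟩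
    simpa [X] using hi
  -- `legSpan d` is stable under multiplication by `A`, the algebra generated by the coordinates
  have hmul : ∀ g ∈ A, ∀ w ∈ legSpan d, ∃ w' ∈ legSpan d, ∀ x : cube d, w' x = g x * w x := by
    intro g hg
    have hg' : g ∈ Algebra.adjoin ℂ (Set.range X) := by
      have h1 : g ∈ A.toSubalgebra := hg
      rwa [StarAlgebra.adjoin_toSubalgebra, hstar, Set.union_self] at h1
    clear hg
    induction hg' using Algebra.adjoin_induction with
    | mem g hg =>
      obtain ⟨i, rfl⟩ := hg
      exact fun w hw => ⟨_, coord_mul_mem_legSpan i hw, fun x => rfl⟩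
    | algebraMap c =>
      exact fun w hw => ⟨_, (legSpan d).smul_mem c hw, fun x => by simp⟩
    | add g g' hg hg' h h' =>
      intro w hw
      obtain ⟨w1, hw1, e1⟩ := h w hw
      obtain ⟨w2, hw2, e2⟩ := h' w hw
      exact ⟨w1 + w2, (legSpan d).add_mem hw1 hw2, fun x => by
        rw [Pi.add_apply, e1, e2, ContinuousMap.add_apply]; ring⟩
    | mul g g' hg hg' h h' =>
      intro w hw
      obtain ⟨w2, hw2, e2⟩ := h' w hw
      obtain ⟨w1, hw1, e1⟩ := h w2 hw2
      exact ⟨w1, hw1, fun x => by rw [e1, e2, ContinuousMap.mul_apply]; ring⟩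
  have hdense := ContinuousMap.starSubalgebra_topologicalClosure_eq_top_of_separatesPoints A hsep
  let f' : C(cube d, ℂ) := ⟨fun t => f t, by fun_prop⟩
  have hf' : f' ∈ closure (A : Set C(cube d, ℂ)) := by
    rw [← StarSubalgebra.topologicalClosure_coe, hdense]; trivial
  obtain ⟨g, hgA, hg⟩ := Metric.mem_closure_iff.1 hf' ε hε
  have hone : legE (0 : Fin d → ℕ) ∈ legSpan d := Submodule.subset_span ⟨_, rfl⟩
  obtain ⟨w, hw, e⟩ := hmul g hgA _ hone
  refine ⟨w, hw, fun t ht => ?_⟩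
  have h1 : legE (0 : Fin d → ℕ) t = 1 := by
    simp [legE, prodLeg, pf, legendreC, Polynomial.shiftedLegendre]
  have h2 : w t = g ⟨t, ht⟩ := by rw [e ⟨t, ht⟩, h1, mul_one]
  rw [h2, ← dist_eq_norm]
  exact (ContinuousMap.dist_apply_le_dist (f := f') (g := g) ⟨t, ht⟩).trans hg.le

lemma exists_span_legLp_ae_eq {d : ℕ} {w : EuclideanSpace ℝ (Fin d) → ℂ} (hw : w ∈ legSpan d) :
    ∃ v ∈ Submodule.span ℂ (Set.range (legLp (d := d))), v =ᵐ[μcube d] w := by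
  induction hw using Submodule.span_induction with
  | mem w hw =>
    obtain ⟨α, rfl⟩ := hw
    exact ⟨legLp α, Submodule.subset_span ⟨α, rfl⟩, legLp_coe α⟩
  | zero => exact ⟨0, Submodule.zero_mem _, Lp.coeFn_zero _ _ _⟩
  | add r r' _ _ h h' =>
    obtain ⟨v, hv, e⟩ := h
    obtain ⟨v', hv', e'⟩ := h'
    exact ⟨v + v', Submodule.add_mem _ hv hv', (Lp.coeFn_add v v').trans (e.add e')⟩
  | smul c r _ h =>
    obtain ⟨v, hv, e⟩ := h
    exact ⟨c • v, Submodule.smul_mem _ c hv, (Lp.coeFn_smul c v).trans (e.const_smul c)⟩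

lemma closure_span_legLp (d : ℕ) :
    ⊤ ≤ (Submodule.span ℂ (Set.range (legLp (d := d)))).topologicalClosure := by
  intro ξ _
  change ξ ∈ closure _
  refine Metric.mem_closure_iff.2 fun ε hε => ?_
  have : Fact ((1 : ℝ≥0∞) ≤ 2) := ⟨one_le_two⟩
  have : (μcube d).WeaklyRegular := inferInstance
  obtain ⟨f, hf⟩ := (BoundedContinuousFunction.toLp_denseRange ℂ (μcube d) (p := 2) ℂ
    (by norm_num)).exists_dist_lt ξ (half_pos hε)
  set m : ℝ := (measureUnivNNReal (μcube d) : ℝ) ^ (2 : ℝ≥0∞).toReal⁻¹ with hm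
  have hm0 : 0 ≤ m := by positivity
  obtain ⟨w, hw, hfw⟩ := exists_legSpan_approx f.continuous
    (show 0 < ε / 2 / (m + 1) by positivity)
  obtain ⟨v, hv, hvw⟩ := exists_span_legLp_ae_eq hw
  refine ⟨v, hv, ?_⟩
  have h1 : ‖BoundedContinuousFunction.toLp 2 (μcube d) ℂ f - v‖ ≤ m * (ε / 2 / (m + 1)) := by
    refine Lp.norm_le_of_ae_bound (by positivity) ?_
    filter_upwards [Lp.coeFn_sub (BoundedContinuousFunction.toLp 2 (μcube d) ℂ f) v, hvw,
      BoundedContinuousFunction.coeFn_toLp 2 (μcube d) ℂ f,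
      ae_restrict_mem (measurableSet_cube d)] with t h1 h2 h3 h4
    rw [h1, Pi.sub_apply, h2, h3]
    exact hfw t h4
  have h2 : m * (ε / 2 / (m + 1)) ≤ ε / 2 := by
    rw [mul_div_assoc', div_le_iff₀ (by positivity)]
    nlinarith
  calc dist ξ v ≤ dist ξ (BoundedContinuousFunction.toLp 2 (μcube d) ℂ f) +
        dist (BoundedContinuousFunction.toLp 2 (μcube d) ℂ f) v := dist_triangle _ _ _
    _ < ε / 2 + ε / 2 := by
        rw [dist_eq_norm (BoundedContinuousFunction.toLp 2 (μcube d) ℂ f) v]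
        exact add_lt_add_of_lt_of_le hf (h1.trans h2)
    _ = ε := add_halves ε

/-- The normalized products of shifted Legendre polynomials form an orthonormal basis of `L²`. -/
lemma exists_legendre_basis (d : ℕ) : ∃ b : HilbertBasis (Fin d → ℕ) ℂ (Lp ℂ 2 (μcube d)),
    ∀ α, b α = ((‖legLp α‖⁻¹ : ℝ) : ℂ) • legLp α := by
  let v : (Fin d → ℕ) → Lp ℂ 2 (μcube d) := fun α => ((‖legLp α‖⁻¹ : ℝ) : ℂ) • legLp α
  have hv : Orthonormal ℂ v := by
    refine ⟨fun α => ?_, fun α β h => ?_⟩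
    · have := norm_ne_zero_iff.2 (legLp_ne_zero α)
      simp [v, norm_smul, this]
    · simp only [v, inner_smul_left, inner_smul_right, inner_legLp_legLp h, mul_zero]
  have hsp : ⊤ ≤ (Submodule.span ℂ (Set.range v)).topologicalClosure := by
    refine (closure_span_legLp d).trans (Submodule.topologicalClosure_mono ?_)
    refine Submodule.span_le.2 ?_
    rintro _ ⟨α, rfl⟩
    have : legLp α = ((‖legLp α‖ : ℝ) : ℂ) • v α := by
      have := norm_ne_zero_iff.2 (legLp_ne_zero α)
      simp only [v, smul_smul]
      rw [← Complex.ofReal_mul, mul_inv_cancel₀ this, Complex.ofReal_one, one_smul]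
    rw [this]
    exact Submodule.smul_mem _ _ (Submodule.subset_span ⟨α, rfl⟩)
  exact ⟨HilbertBasis.mk hv hsp, fun α => by rw [HilbertBasis.coe_mk]⟩

/-! ### Integral operators and their singular values -/

lemma eLpNorm_two_sq {α : Type*} [MeasurableSpace α] (μ : Measure α) (g : α → ℂ) :
    eLpNorm g 2 μ ^ 2 = ∫⁻ x, ‖g x‖ₑ ^ 2 ∂μ := by
  rw [eLpNorm_eq_lintegral_rpow_enorm_toReal two_ne_zero ENNReal.ofNat_ne_top]
  have := ENNReal.rpow_inv_natCast_pow two_ne_zero (∫⁻ x, ‖g x‖ₑ ^ 2 ∂μ)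
  simpa using this

/-- The Cauchy–Schwarz inequality in squared form. -/
lemma sq_lintegral_mul_le {α : Type*} [MeasurableSpace α] (μ : Measure α) {F G : α → ℝ≥0∞}
    (hF : AEMeasurable F μ) (hG : AEMeasurable G μ) :
    (∫⁻ x, F x * G x ∂μ) ^ 2 ≤ (∫⁻ x, F x ^ 2 ∂μ) * ∫⁻ x, G x ^ 2 ∂μ := by
  have h := ENNReal.lintegral_mul_le_Lp_mul_Lq μ Real.HolderConjugate.two_two hF hG
  have h1 := ENNReal.rpow_inv_natCast_pow two_ne_zero (∫⁻ x, F x ^ 2 ∂μ)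
  have h2 := ENNReal.rpow_inv_natCast_pow two_ne_zero (∫⁻ x, G x ^ 2 ∂μ)
  calc (∫⁻ x, F x * G x ∂μ) ^ 2
      ≤ ((∫⁻ x, F x ^ (2 : ℝ) ∂μ) ^ (1 / (2 : ℝ)) * (∫⁻ x, G x ^ (2 : ℝ) ∂μ) ^ (1 / (2 : ℝ))) ^ 2 :=
        pow_le_pow_left' h 2
    _ = _ := by
        rw [mul_pow]
        simp only [ENNReal.rpow_ofNat, one_div]
        simp only [Nat.cast_ofNat] at h1 h2
        rw [h1, h2]

/-- A continuous kernel defines an operator on `L²` whose norm is at most the `L²`-norm of the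
kernel on `[0,1]^d × [0,1]^d`. -/
lemma exists_integralOp {d : ℕ} {f : KDom d → ℂ} (hf : Continuous f) {M : ℝ} (hM : 0 ≤ M)
    (hfM : ∫⁻ p, ‖f p‖ₑ ^ 2 ∂(μ2 d) ≤ ENNReal.ofReal M ^ 2) (ξ : Lp ℂ 2 (μcube d)) :
    ∃ w : Lp ℂ 2 (μcube d), (w =ᵐ[μcube d] fun t => ∫ s, f (t, s) * ξ s ∂(μcube d)) ∧
      ‖w‖ ≤ M * ‖ξ‖ := by
  set g : EuclideanSpace ℝ (Fin d) → ℂ := fun t => ∫ s, f (t, s) * ξ s ∂(μcube d) with hg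
  have hξ : AEStronglyMeasurable ξ (μcube d) := (Lp.memLp ξ).1
  have hmeas : AEStronglyMeasurable g (μcube d) := by
    have h1 : AEStronglyMeasurable (fun p : KDom d => f p * ξ p.2) ((μcube d).prod (μcube d)) :=
      hf.aestronglyMeasurable.mul hξ.comp_snd
    exact h1.integral_prod_right'
  have hpt : ∀ t, ‖g t‖ₑ ^ 2 ≤ (∫⁻ s, ‖f (t, s)‖ₑ ^ 2 ∂(μcube d)) * ‖ξ‖ₑ ^ 2 := by
    intro t
    rw [Lp.enorm_def, eLpNorm_two_sq]
    have hft : Continuous fun s => f (t, s) := hf.comp (by fun_prop)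
    refine le_trans ?_ (sq_lintegral_mul_le (μcube d) hft.enorm.measurable.aemeasurable hξ.enorm)
    refine pow_le_pow_left' ?_ 2
    refine (enorm_integral_le_lintegral_enorm _).trans_eq ?_
    simp only [enorm_mul]
  have hsq : eLpNorm g 2 (μcube d) ^ 2 ≤ (ENNReal.ofReal M * ‖ξ‖ₑ) ^ 2 := by
    rw [eLpNorm_two_sq, mul_pow]
    calc ∫⁻ t, ‖g t‖ₑ ^ 2 ∂(μcube d)
        ≤ ∫⁻ t, (∫⁻ s, ‖f (t, s)‖ₑ ^ 2 ∂(μcube d)) * ‖ξ‖ₑ ^ 2 ∂(μcube d) := lintegral_mono hpt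
      _ = (∫⁻ p, ‖f p‖ₑ ^ 2 ∂(μ2 d)) * ‖ξ‖ₑ ^ 2 := by
          rw [lintegral_mul_const' _ _ (by finiteness), μ2,
            lintegral_prod _ (hf.enorm.measurable.pow_const 2).aemeasurable]
      _ ≤ _ := by gcongr
  have hle : eLpNorm g 2 (μcube d) ≤ ENNReal.ofReal M * ‖ξ‖ₑ :=
    (ENNReal.pow_le_pow_left_iff two_ne_zero).1 hsq
  have hmem : MemLp g 2 (μcube d) := ⟨hmeas, hle.trans_lt (by finiteness)⟩
  refine ⟨hmem.toLp, hmem.coeFn_toLp, ?_⟩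
  have h1 : ENNReal.ofReal ‖hmem.toLp‖ ≤ ENNReal.ofReal (M * ‖ξ‖) := by
    rw [ofReal_norm, Lp.enorm_toLp, ENNReal.ofReal_mul hM, ofReal_norm]
    exact hle
  exact (ENNReal.ofReal_le_ofReal_iff (by positivity)).1 h1

/-- The Legendre coefficients of `∫ f (·, s) ξ s ds`, by Fubini. -/
lemma inner_legLp_integralOp {d : ℕ} {f : KDom d → ℂ} (hf : Continuous f)
    {ξ w : Lp ℂ 2 (μcube d)} (hw : w =ᵐ[μcube d] fun t => ∫ s, f (t, s) * ξ s ∂(μcube d))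
    (α : Fin d → ℕ) :
    inner ℂ (legLp α) w =
      ∫ s, (∫ t, f (t, s) * prodLeg α (t, s) ∂(μcube d)) * ξ s ∂(μcube d) := by
  have hc : Continuous fun p : KDom d => f p * prodLeg α p :=
    hf.mul (contDiff_prodLeg α (n := 0)).continuous
  have hInt : Integrable (fun p : KDom d => (f p * prodLeg α p) * ξ p.2)
      ((μcube d).prod (μcube d)) := by
    obtain ⟨C, hC⟩ := ((isCompact_cube d).prod (isCompact_cube d)).exists_bound_of_continuousOn
      hc.continuousOn
    refine Integrable.bdd_mul (c := C) ?_ hc.aestronglyMeasurable ?_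
    · exact ((Lp.memLp ξ).integrable one_le_two).comp_snd _
    · filter_upwards [ae_μ2_mem d] with p hp using hC p hp
  rw [inner_legLp]
  calc ∫ t, w t * legE α t ∂(μcube d)
      = ∫ t, ∫ s, (f (t, s) * prodLeg α (t, s)) * ξ s ∂(μcube d) ∂(μcube d) := by
        refine integral_congr_ae ?_
        filter_upwards [hw] with t ht
        rw [ht, ← integral_mul_const]
        refine integral_congr_ae (.of_forall fun s => ?_)
        simp only [legE_eq]
        ring
    _ = ∫ s, ∫ t, (f (t, s) * prodLeg α (t, s)) * ξ s ∂(μcube d) ∂(μcube d) :=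
        integral_integral_swap hInt
    _ = _ := by simp only [integral_mul_const]

lemma le_norm_eig {d N : ℕ} {α : Fin d → ℕ} {i : Fin d} (hi : N ≤ α i) :
    (N : ℝ) ^ 2 ≤ ‖eig α‖ := by
  have h : eig α = ((∑ i, α i * (α i + 1) : ℕ) : ℂ) := by simp [eig]
  rw [h, Complex.norm_natCast]
  have h1 : α i * (α i + 1) ≤ ∑ i, α i * (α i + 1) :=
    Finset.single_le_sum (f := fun i => α i * (α i + 1)) (fun _ _ => Nat.zero_le _)
      (Finset.mem_univ i)
  have h2 : N ^ 2 ≤ ∑ i, α i * (α i + 1) := by nlinarith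
  exact_mod_cast h2

/-- The singular value estimate. The case `j = 0`, `A = ∅` bounds `‖T‖`; in general the Legendre
coefficients of `T ξ` outside `{0, …, N - 1}^d` gain the factor `N ^ (-2 j)` over those of the
operator with kernel `lap^[j] K`. -/
lemma sval_le_of_kernel {d : ℕ} (j : ℕ) {K : KDom d → ℂ}
    (hK : ContDiff ℝ ((2 * j : ℕ) : WithTop ℕ∞) K)
    (hc : Continuous (lap^[j] K)) {M : ℝ} (hM : 0 ≤ M)
    (hKM : ∫⁻ p, ‖(lap^[j] K) p‖ₑ ^ 2 ∂(μ2 d) ≤ ENNReal.ofReal M ^ 2)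
    {T : Lp ℂ 2 (μcube d) →L[ℂ] Lp ℂ 2 (μcube d)}
    (hT : ∀ ξ : Lp ℂ 2 (μcube d), (T ξ : EuclideanSpace ℝ (Fin d) → ℂ) =ᵐ[μcube d]
      fun t => ∫ s, K (t, s) * ξ s ∂(μcube d))
    {k : ℕ} {c : ℝ} (hc0 : 0 ≤ c) (A : Finset (Fin d → ℕ)) (hA : A.card ≤ k)
    (hcA : ∀ α ∉ A, 1 ≤ c * ‖eig α‖ ^ j) : sval T k ≤ c * M := by
  obtain ⟨b, hb⟩ := exists_legendre_basis d
  refine sval_le_of_basis b A T k hA c M hc0 hM fun ξ => ?_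
  obtain ⟨w, hw, hwM⟩ := exists_integralOp hc hM hKM ξ
  refine ⟨w, hwM, fun α hα => ?_⟩
  have h1 : inner ℂ (legLp α) w = eig α ^ j * inner ℂ (legLp α) (T ξ) := by
    rw [inner_legLp_integralOp hc hw, inner_legLp_integralOp hK.continuous (hT ξ),
      ← integral_const_mul]
    simp only [integral_lap_iterate_mul_prodLeg j α _ K hK, mul_assoc]
  have h2 : inner ℂ (b α) w = eig α ^ j * inner ℂ (b α) (T ξ) := by
    rw [hb, inner_smul_left, inner_smul_left, h1]
    ring
  rw [h2, norm_mul, norm_pow, ← mul_assoc]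
  exact le_mul_of_one_le_left (norm_nonneg _) (hcA α hα)

lemma sobNorm_nonneg {d m : ℕ} (K : KDom d → ℂ) : 0 ≤ sobNorm d m K :=
  Finset.sum_nonneg fun _ _ => integral_nonneg fun _ => norm_nonneg _

/-- The `L²`-norm of `lap^[j] K` is controlled by the `W^{2d+2,1}`-norm of `K`, as long as
`d + 2 * j ≤ 2 * d + 2`: the operator takes `2 * j` derivatives and the embedding `d` more. -/
lemma lintegral_sq_lap_iterate_le (d j : ℕ) (hj : d + 2 * j ≤ 2 * d + 2) :
    ∃ C : ℝ, 0 ≤ C ∧ ∀ K : KDom d → ℂ, ContDiff ℝ ((2 * d + 2 : ℕ) : WithTop ℕ∞) K →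
      Continuous (lap^[j] K) ∧ ∫⁻ p, ‖(lap^[j] K) p‖ₑ ^ 2 ∂(μ2 d) ≤
        ENNReal.ofReal (C * sobNorm d (2 * d + 2) K) ^ 2 := by
  obtain ⟨C, hC⟩ := SN_lap_iterate_le d j d
  refine ⟨2 ^ d * C, by positivity, fun K hK => ?_⟩
  obtain ⟨h1, h2⟩ := hC K (hK.of_le (by exact_mod_cast hj))
  refine ⟨h1.continuous, (lintegral_sq_le h1).trans (pow_le_pow_left' ?_ 2)⟩
  calc 2 ^ d * SN d (lap^[j] K) ≤ 2 ^ d * (C * SN (2 * d + 2) K) := by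
        gcongr
        exact h2.trans (by gcongr; exact SN_mono hj K)
    _ = _ := by
        rw [SN_eq_sobNorm hK, mul_assoc, ENNReal.ofReal_mul (by positivity),
          ENNReal.ofReal_mul (by positivity), ENNReal.ofReal_coe_nnreal,
          ENNReal.ofReal_pow (by norm_num), ENNReal.ofReal_ofNat]

/-- if `K ∈ W^{2d+2,1}([0,1]^d × [0,1]^d)` and `T` is the integral operator
on `L₂((0,1)^d)` with kernel `K`, then `T` is trace class and
`‖T‖₁ ≤ c_d ‖K‖_{W^{2d+2,1}}` for a constant `c_d` depending only on `d`. -/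
theorem stmt5 (d : ℕ) :
    ∃ c : ℝ, 0 < c ∧
      ∀ (K : EuclideanSpace ℝ (Fin d) × EuclideanSpace ℝ (Fin d) → ℂ),
        ContDiff ℝ (2 * d + 2) K →
        ∀ T : Lp ℂ 2 (μcube d) →L[ℂ] Lp ℂ 2 (μcube d),
          (∀ ξ : Lp ℂ 2 (μcube d),
            (T ξ : EuclideanSpace ℝ (Fin d) → ℂ) =ᵐ[μcube d]
              fun t => ∫ s, K (t, s) * ξ s ∂(μcube d)) →
          Summable (sval T) ∧ ∑' k, sval T k ≤ c * sobNorm d (2 * d + 2) K := by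
  -- `2 * j ∈ {d + 1, d + 2}`: the least even number of derivatives exceeding `d`
  set j := (d + 2) / 2 with hj
  obtain ⟨b, hbs, hb0, hb⟩ := exists_summable_bound d
  obtain ⟨C₀, hC₀, h₀⟩ := lintegral_sq_lap_iterate_le d 0 (by omega)
  obtain ⟨C₁, hC₁, h₁⟩ := lintegral_sq_lap_iterate_le d j (by omega)
  have hbt : 0 ≤ ∑' k, b k := tsum_nonneg hb0
  refine ⟨(∑' k, b k) * (C₀ + C₁) + 1, by positivity, fun K hK T hT => ?_⟩
  have hK' : ContDiff ℝ ((2 * d + 2 : ℕ) : WithTop ℕ∞) K := by exact_mod_cast hK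
  set S := sobNorm d (2 * d + 2) K with hS
  have hS0 : 0 ≤ S := sobNorm_nonneg K
  have hM : 0 ≤ (C₀ + C₁) * S := by positivity
  have hsv : ∀ k, sval T k ≤ b k * ((C₀ + C₁) * S) := by
    refine hb (sval T) _ hM ?_ fun k N hN hNk => ?_
    · have := sval_le_of_kernel (k := 0) (c := 1) 0 (hK'.of_le (by simp)) (h₀ K hK').1
        (M := C₀ * S) (by positivity) (h₀ K hK').2 hT zero_le_one ∅ le_rfl (by simp)
      rw [one_mul] at this
      exact this.trans (by gcongr; linarith)
    · have hN0 : (0 : ℝ) < N := by exact_mod_cast hN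
      have := sval_le_of_kernel (k := k) (c := 1 / (N : ℝ) ^ (2 * j)) j
        (hK'.of_le (by exact_mod_cast (by omega : 2 * j ≤ 2 * d + 2))) (h₁ K hK').1
        (M := C₁ * S) (by positivity) (h₁ K hK').2 hT (by positivity)
        (Fintype.piFinset fun _ => Finset.range N)
        (by rw [Fintype.card_piFinset_const, Finset.card_range]; exact hNk) ?_
      · exact this.trans (by gcongr; linarith)
      · intro α hα
        have : ∃ i, N ≤ α i := by simpa [Fintype.mem_piFinset] using hα
        obtain ⟨i, hi⟩ := this
        rw [one_div_mul_eq_div, one_le_div (by positivity), pow_mul]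
        exact pow_le_pow_left₀ (by positivity) (le_norm_eig hi) j
  have hsum := hbs.mul_right ((C₀ + C₁) * S)
  have hT' : Summable (sval T) := Summable.of_nonneg_of_le (sval_nonneg T) hsv hsum
  refine ⟨hT', (hT'.tsum_le_tsum hsv hsum).trans ?_⟩
  rw [tsum_mul_right]
  nlinarith
end
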